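/- arXiv:1901.09752 — 3 statements merged into one kernel-verified Lean document; each statement's English description precedes it below -/
import Mathlib

section
/- Every C² function u : ℝ² → ℝ defined on the entire plane that satisfies the minimal surface equation (1 + u_y²)·u_xx − 2·u_x·u_y·u_xy + (1 + u_x²)·u_yy = 0 at every point of ℝ² is affine linear, i.e. there exist a, b, c ∈ ℝ with u(x,y) = a·x + b·y + c for all (x,y) ∈ ℝ². -/
/-- First partial derivative in the `x`-direction. -/
noncomputable def ux (u : ℝ × ℝ → ℝ) (p : ℝ × ℝ) : ℝ := fderiv ℝ u p (1, 0)

/-- First partial derivative in the `y`-direction. -/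
noncomputable def uy (u : ℝ × ℝ → ℝ) (p : ℝ × ℝ) : ℝ := fderiv ℝ u p (0, 1)

/-- Second partial derivative `u_xx`. -/
noncomputable def uxx (u : ℝ × ℝ → ℝ) (p : ℝ × ℝ) : ℝ := fderiv ℝ (ux u) p (1, 0)

/-- Second partial derivative `u_xy`. -/
noncomputable def uxy (u : ℝ × ℝ → ℝ) (p : ℝ × ℝ) : ℝ := fderiv ℝ (ux u) p (0, 1)

/-- Second partial derivative `u_yy`. -/
noncomputable def uyy (u : ℝ × ℝ → ℝ) (p : ℝ × ℝ) : ℝ := fderiv ℝ (uy u) p (0, 1)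

noncomputable def linForm (a b : ℝ) : ℝ × ℝ →L[ℝ] ℝ :=
  a • ContinuousLinearMap.fst ℝ ℝ ℝ + b • ContinuousLinearMap.snd ℝ ℝ ℝ

lemma linForm_apply (a b : ℝ) (v : ℝ × ℝ) : linForm a b v = a * v.1 + b * v.2 := by
  simp [linForm]

lemma clm_eq (L : ℝ × ℝ →L[ℝ] ℝ) : L = linForm (L (1, 0)) (L (0, 1)) := by
  ext <;> simp [linForm]

lemma poincare_plane (P Q : ℝ × ℝ → ℝ) (hP : Differentiable ℝ P) (hQ : Differentiable ℝ Q)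
    (h : ∀ z, fderiv ℝ P z (0, 1) = fderiv ℝ Q z (1, 0)) :
    ∃ f : ℝ × ℝ → ℝ, ∀ z, HasFDerivAt f (linForm (P z) (Q z)) z := by
  have hd : ∀ z, HasFDerivAt (fun z => linForm (P z) (Q z))
      ((fderiv ℝ P z).smulRight (ContinuousLinearMap.fst ℝ ℝ ℝ)
        + (fderiv ℝ Q z).smulRight (ContinuousLinearMap.snd ℝ ℝ ℝ)) z := by
    intro z
    have h1 := (hP z).hasFDerivAt.smul_const (ContinuousLinearMap.fst ℝ ℝ ℝ)
    have h2 := (hQ z).hasFDerivAt.smul_const (ContinuousLinearMap.snd ℝ ℝ ℝ)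
    exact h1.add h2
  obtain ⟨f, hf⟩ := convex_univ.exists_forall_hasFDerivAt_of_fderiv_symmetric
    (ω := fun z => linForm (P z) (Q z)) isOpen_univ
    (fun z _ => (hd z).differentiableAt.differentiableWithinAt) (by
      intro z _ x y
      rw [(hd z).fderiv]
      have hz := h z
      rw [clm_eq (fderiv ℝ P z), clm_eq (fderiv ℝ Q z)]
      simp [linForm_apply, hz]
      ring)
  exact ⟨f, fun z => hf z trivial⟩

section jorgens
variable {r s t F G : ℝ × ℝ → ℝ}

noncomputable def lewyFwd (a b c : ℝ) : ℝ × ℝ →L[ℝ] ℝ × ℝ :=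
  (linForm (1 + a) b).prod (linForm b (1 + c))

noncomputable def lewyInv (a b c : ℝ) : ℝ × ℝ →L[ℝ] ℝ × ℝ :=
  (linForm ((1 + c) / (2 + a + c)) (-b / (2 + a + c))).prod
    (linForm (-b / (2 + a + c)) ((1 + a) / (2 + a + c)))

noncomputable def lewyEquiv (a b c : ℝ) (h : a * c - b ^ 2 = 1) (h2 : 0 < 2 + a + c) :
    (ℝ × ℝ) ≃L[ℝ] ℝ × ℝ :=
  ContinuousLinearEquiv.equivOfInverse (lewyFwd a b c) (lewyInv a b c)
    (by
      intro v
      ext <;> simp only [lewyFwd, lewyInv, ContinuousLinearMap.prod_apply, linForm_apply] <;>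
        field_simp
      · linear_combination v.1 * h
      · linear_combination v.2 * h)
    (by
      intro v
      ext <;> simp only [lewyFwd, lewyInv, ContinuousLinearMap.prod_apply, linForm_apply] <;>
        field_simp
      · linear_combination v.1 * h
      · linear_combination v.2 * h)

lemma mono_aux (hdet : ∀ z, r z * t z - s z ^ 2 = 1) (hr : ∀ z, 0 < r z)
    (hF : ∀ z, HasFDerivAt F (linForm (r z) (s z)) z)
    (hG : ∀ z, HasFDerivAt G (linForm (s z) (t z)) z) (a b : ℝ × ℝ) :
    0 ≤ (F b - F a) * (b.1 - a.1) + (G b - G a) * (b.2 - a.2) := by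
  have hl : ∀ τ : ℝ, HasDerivAt (fun τ : ℝ => a + τ • (b - a)) (b - a) τ := by
    intro τ
    simpa using ((hasDerivAt_id τ).smul_const (b - a)).const_add a
  have hφ : ∀ τ : ℝ, HasDerivAt (fun τ : ℝ => F (a + τ • (b - a)) * (b.1 - a.1)
      + G (a + τ • (b - a)) * (b.2 - a.2))
      (linForm (r (a + τ • (b - a))) (s (a + τ • (b - a))) (b - a) * (b.1 - a.1)
       + linForm (s (a + τ • (b - a))) (t (a + τ • (b - a))) (b - a) * (b.2 - a.2)) τ := by
    intro τ
    exact (((hF _).comp_hasDerivAt τ (hl τ)).mul_const _).add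
      (((hG _).comp_hasDerivAt τ (hl τ)).mul_const _)
  have hm := monotone_of_hasDerivAt_nonneg hφ (by
    intro τ
    simp only [linForm_apply, Prod.fst_sub, Prod.snd_sub, Pi.zero_apply]
    set z := a + τ • (b - a)
    have h1 := hdet z
    have h2 := hr z
    have : 0 ≤ r z * ((r z * (b.1 - a.1) + s z * (b.2 - a.2)) * (b.1 - a.1) +
        (s z * (b.1 - a.1) + t z * (b.2 - a.2)) * (b.2 - a.2)) := by
      have : r z * ((r z * (b.1 - a.1) + s z * (b.2 - a.2)) * (b.1 - a.1) +
        (s z * (b.1 - a.1) + t z * (b.2 - a.2)) * (b.2 - a.2)) =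
        (r z * (b.1 - a.1) + s z * (b.2 - a.2)) ^ 2 + (b.2 - a.2) ^ 2 := by
        linear_combination (b.2 - a.2) ^ 2 * h1
      rw [this]; positivity
    exact nonneg_of_mul_nonneg_right this h2)
  have := hm (zero_le_one)
  simp at this
  linarith

lemma lewy_antilip (hdet : ∀ z, r z * t z - s z ^ 2 = 1) (hr : ∀ z, 0 < r z)
    (hF : ∀ z, HasFDerivAt F (linForm (r z) (s z)) z)
    (hG : ∀ z, HasFDerivAt G (linForm (s z) (t z)) z) :
    AntilipschitzWith 2 (fun z : ℝ × ℝ => (z.1 + F z, z.2 + G z)) := by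
  apply AntilipschitzWith.of_le_mul_dist
  intro a b
  have h := mono_aux hdet hr hF hG b a
  set X := (fun z : ℝ × ℝ => (z.1 + F z, z.2 + G z)) a with hX
  set Y := (fun z : ℝ × ℝ => (z.1 + F z, z.2 + G z)) b with hY
  have hX1 : X.1 = a.1 + F a := rfl
  have hX2 : X.2 = a.2 + G a := rfl
  have hY1 : Y.1 = b.1 + F b := rfl
  have hY2 : Y.2 = b.2 + G b := rfl
  have e : (a.1 - b.1) ^ 2 + (a.2 - b.2) ^ 2
      ≤ (a.1 - b.1) * (X.1 - Y.1) + (a.2 - b.2) * (X.2 - Y.2) := by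
    rw [hX1, hX2, hY1, hY2]; linarith
  rw [dist_eq_norm, dist_eq_norm]
  have a1 : |a.1 - b.1| ≤ ‖a - b‖ := norm_fst_le (a - b)
  have a2 : |a.2 - b.2| ≤ ‖a - b‖ := norm_snd_le (a - b)
  have b1 : |X.1 - Y.1| ≤ ‖X - Y‖ := norm_fst_le (X - Y)
  have b2 : |X.2 - Y.2| ≤ ‖X - Y‖ := norm_snd_le (X - Y)
  have c1 : (a.1 - b.1) * (X.1 - Y.1) ≤ ‖a - b‖ * ‖X - Y‖ := by
    refine (le_abs_self _).trans ?_
    rw [abs_mul]; gcongr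
  have c2 : (a.2 - b.2) * (X.2 - Y.2) ≤ ‖a - b‖ * ‖X - Y‖ := by
    refine (le_abs_self _).trans ?_
    rw [abs_mul]; gcongr
  have d : ‖a - b‖ ^ 2 ≤ (a.1 - b.1) ^ 2 + (a.2 - b.2) ^ 2 := by
    have : ‖a - b‖ = max |a.1 - b.1| |a.2 - b.2| := rfl
    rw [this]
    rcases max_choice |a.1 - b.1| |a.2 - b.2| with h | h <;> rw [h, sq_abs] <;>
      nlinarith [sq_nonneg (a.1 - b.1), sq_nonneg (a.2 - b.2)]
  have : ‖a - b‖ * ‖a - b‖ ≤ ‖a - b‖ * (2 * ‖X - Y‖) := by nlinarith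
  rcases (norm_nonneg (a - b)).eq_or_lt with h0 | h0
  · rw [← h0]; positivity
  · exact le_of_mul_le_mul_left this h0

lemma jorgens_const (hdet : ∀ z, r z * t z - s z ^ 2 = 1) (hr : ∀ z, 0 < r z)
    (hrc : Continuous r) (hsc : Continuous s) (htc : Continuous t)
    (hF : ∀ z, HasFDerivAt F (linForm (r z) (s z)) z)
    (hG : ∀ z, HasFDerivAt G (linForm (s z) (t z)) z) :
    ∃ α β : ℝ, ∀ z, (t z - r z) / (2 + r z + t z) = α ∧ 2 * s z / (2 + r z + t z) = β := by
  have ht : ∀ z, 0 < t z := fun z => by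
    have h1 := hdet z
    have : 0 < r z * t z := by nlinarith [sq_nonneg (s z)]
    exact (pos_iff_pos_of_mul_pos this).1 (hr z)
  have hpos : ∀ z, 0 < 2 + r z + t z := fun z => by have := hr z; have := ht z; linarith
  set T : ℝ × ℝ → ℝ × ℝ := fun z => (z.1 + F z, z.2 + G z) with hT
  have hanti : AntilipschitzWith 2 T := lewy_antilip hdet hr hF hG
  have hTd : ∀ z, HasFDerivAt T (lewyFwd (r z) (s z) (t z)) z := by
    intro z
    have h1 : HasFDerivAt (fun z : ℝ × ℝ => z.1 + F z) (linForm (1 + r z) (s z)) z := by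
      refine (hasFDerivAt_fst.add (hF z)).congr_fderiv ?_
      ext <;> simp [linForm]
    have h2 : HasFDerivAt (fun z : ℝ × ℝ => z.2 + G z) (linForm (s z) (1 + t z)) z := by
      refine (hasFDerivAt_snd.add (hG z)).congr_fderiv ?_
      ext <;> simp [linForm]
    exact h1.prodMk h2
  have hTe : ∀ z, HasFDerivAt T (lewyEquiv (r z) (s z) (t z) (hdet z) (hpos z) :
      ℝ × ℝ →L[ℝ] ℝ × ℝ) z := hTd
  have hcont : Continuous (fun z => lewyFwd (r z) (s z) (t z)) := by
    have h1 : Continuous fun z => linForm (1 + r z) (s z) := by unfold linForm; fun_prop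
    have h2 : Continuous fun z => linForm (s z) (1 + t z) := by unfold linForm; fun_prop
    exact (ContinuousLinearMap.prodL (𝕜 := ℝ) (E := ℝ × ℝ) (F := ℝ) (G := ℝ) ℝ).continuous.comp (h1.prodMk h2)
  have hstrict : ∀ z, HasStrictFDerivAt T (lewyEquiv (r z) (s z) (t z) (hdet z) (hpos z) :
      ℝ × ℝ →L[ℝ] ℝ × ℝ) z := fun z =>
    hasStrictFDerivAt_of_hasFDerivAt_of_continuousAt (Filter.Eventually.of_forall hTd)
      hcont.continuousAt
  have hTcont : Continuous T := continuous_iff_continuousAt.2 fun z => (hTd z).continuousAt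
  have hopen : IsOpenMap T := isOpenMap_of_hasStrictFDerivAt_equiv hstrict
  have hclosed : IsClosed (Set.range T) := by
    refine IsProperMap.isClosedMap ?_ |>.isClosed_range
    rw [isProperMap_iff_tendsto_cocompact]
    refine ⟨hTcont, ?_⟩
    rw [← Metric.cobounded_eq_cocompact]
    exact hanti.tendsto_cobounded
  have hsurj : Function.Surjective T := by
    rw [← Set.range_eq_univ]
    exact IsClopen.eq_univ ⟨hclosed, hopen.isOpen_range⟩ (Set.range_nonempty T)
  let e : ℝ × ℝ ≃ₜ ℝ × ℝ := (Equiv.ofBijective T ⟨hanti.injective, hsurj⟩).toHomeomorphOfContinuousOpen hTcont hopen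
  have heT : ∀ z, e z = T z := fun z => rfl
  have hTes : ∀ w, T (e.symm w) = w := fun w => e.apply_symm_apply w
  have hS : ∀ w, HasFDerivAt e.symm (lewyInv (r (e.symm w)) (s (e.symm w)) (t (e.symm w))) w := by
    intro w
    exact (hTe (e.symm w)).of_local_left_inverse e.symm.continuous.continuousAt
      (Filter.Eventually.of_forall hTes)
  let N : ℝ × ℝ → ℂ := fun z => Complex.equivRealProdCLM.symm (z.1 - F z, -(z.2 - G z))
  have hN : ∀ z, HasFDerivAt N ((Complex.equivRealProdCLM.symm : ℝ × ℝ →L[ℝ] ℂ).comp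
      ((linForm (1 - r z) (- s z)).prod (linForm (s z) (t z - 1)))) z := by
    intro z
    have h1 : HasFDerivAt (fun z : ℝ × ℝ => z.1 - F z) (linForm (1 - r z) (- s z)) z := by
      refine (hasFDerivAt_fst.sub (hF z)).congr_fderiv ?_
      ext <;> simp [linForm]
    have h2 : HasFDerivAt (fun z : ℝ × ℝ => -(z.2 - G z)) (linForm (s z) (t z - 1)) z := by
      refine (hasFDerivAt_snd.sub (hG z)).neg.congr_fderiv ?_
      ext <;> simp [linForm]
    exact (Complex.equivRealProdCLM.symm : ℝ × ℝ →L[ℝ] ℂ).hasFDerivAt.comp z (h1.prodMk h2)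
  let f : ℂ → ℂ := fun ζ => N (e.symm (Complex.equivRealProdCLM ζ))
  let m : ℝ × ℝ → ℂ := fun z => ⟨(t z - r z) / (2 + r z + t z), 2 * s z / (2 + r z + t z)⟩
  have hf : ∀ ζ, HasDerivAt f (m (e.symm (Complex.equivRealProdCLM ζ))) ζ := by
    intro ζ
    have h := (hN _).comp ζ ((hS _).comp ζ
      (Complex.equivRealProdCLM : ℂ →L[ℝ] ℝ × ℝ).hasFDerivAt)
    rw [hasDerivAt_iff_hasFDerivAt]
    refine hasFDerivAt_of_restrictScalars ℝ h ?_
    simp only [Function.comp_apply, ContinuousLinearEquiv.coe_coe]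
    generalize e.symm (Complex.equivRealProdCLM ζ) = z
    have hz := hpos z
    have hd := hdet z
    ext1 v
    apply Complex.ext
    · simp [linForm_apply, lewyInv, m]
      field_simp
      linear_combination v.re * hd
    · simp [linForm_apply, lewyInv, m]
      field_simp
      linear_combination (-v.im) * hd
  have hdf : Differentiable ℂ f := fun ζ => (hf ζ).differentiableAt
  have hdf' : Differentiable ℂ (deriv f) := by
    exact (hdf.contDiff (n := 2)).differentiable_deriv_two
  have hb : Bornology.IsBounded (Set.range (deriv f)) := by
    rw [isBounded_iff_forall_norm_le]
    refine ⟨2, ?_⟩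
    rintro _ ⟨ζ, rfl⟩
    rw [(hf ζ).deriv]
    set z := e.symm (Complex.equivRealProdCLM ζ)
    refine (Complex.norm_le_abs_re_add_abs_im _).trans ?_
    have hz := hpos z
    have h1 := hr z
    have h2 := ht z
    have hd := hdet z
    have i1 : |(m z).re| ≤ 1 := by
      simp only [m]
      rw [abs_div, abs_of_pos hz, div_le_one hz, abs_le]
      constructor <;> linarith
    have i2 : |(m z).im| ≤ 1 := by
      simp only [m]
      rw [abs_div, abs_of_pos hz, div_le_one hz]
      apply abs_le_of_sq_le_sq _ hz.le
      nlinarith [sq_nonneg (r z - t z)]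
    linarith
  refine ⟨(deriv f 0).re, (deriv f 0).im, fun z => ?_⟩
  have h1 := hdf'.apply_eq_apply_of_bounded hb (Complex.equivRealProdCLM.symm (e z)) 0
  rw [(hf _).deriv] at h1
  simp only [ContinuousLinearEquiv.apply_symm_apply, Homeomorph.symm_apply_apply] at h1
  rw [← h1]
  exact ⟨rfl, rfl⟩

end jorgens

lemma div_sqrt_deriv {A W : ℝ × ℝ → ℝ} {A' W' : ℝ × ℝ →L[ℝ] ℝ} {z : ℝ × ℝ}
    (hA : HasFDerivAt A A' z) (hW : HasFDerivAt W W' z) (h : 0 < W z) :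
    HasFDerivAt (fun z => A z / √(W z))
      ((1 / √(W z)) • A' - (A z / (2 * (√(W z)) ^ 3)) • W') z := by
  have h0 : √(W z) ≠ 0 := (Real.sqrt_pos.2 h).ne'
  have hs := (hasDerivAt_inv h0).comp_hasFDerivAt z (hW.sqrt h.ne')
  have := hA.mul hs
  simp only [div_eq_mul_inv]
  refine this.congr_fderiv ?_
  ext <;> simp <;> field_simp <;> ring

lemma mse_core (u : ℝ × ℝ → ℝ) (hu : ContDiff ℝ 2 u)
    (hmse : ∀ p : ℝ × ℝ,
      (1 + uy u p ^ 2) * uxx u p - 2 * ux u p * uy u p * uxy u p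
        + (1 + ux u p ^ 2) * uyy u p = 0) :
    ∃ α β : ℝ, ∀ z, ux u z = α ∧ uy u z = β := by
  have hfd : Differentiable ℝ (fderiv ℝ u) :=
    (hu.fderiv_right (m := 1) (by norm_num)).differentiable (by norm_num)
  have hp : Differentiable ℝ (ux u) := fun z => (hfd z).clm_apply (differentiableAt_const _)
  have hq : Differentiable ℝ (uy u) := fun z => (hfd z).clm_apply (differentiableAt_const _)
  have hsymm : ∀ z, fderiv ℝ (uy u) z (1, 0) = uxy u z := by
    intro z
    have hs : IsSymmSndFDerivAt ℝ u z := hu.contDiffAt.isSymmSndFDerivAt (by simp)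
    have h1 : fderiv ℝ (uy u) z (1, 0) = fderiv ℝ (fderiv ℝ u) z (1, 0) (0, 1) := by
      have : HasFDerivAt (uy u) _ z := (hfd z).hasFDerivAt.clm_apply (hasFDerivAt_const _ _)
      rw [this.fderiv]; simp
    have h2 : uxy u z = fderiv ℝ (fderiv ℝ u) z (0, 1) (1, 0) := by
      have : HasFDerivAt (ux u) _ z := (hfd z).hasFDerivAt.clm_apply (hasFDerivAt_const _ _)
      unfold uxy
      rw [this.fderiv]; simp
    rw [h1, h2, hs.eq]
  have hpc := hp.continuous
  have hqc := hq.continuous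
  set p := ux u with hpdef
  set q := uy u with hqdef
  set V : ℝ × ℝ → ℝ := fun z => 1 + p z ^ 2 + q z ^ 2 with hV
  have hVpos : ∀ z, 0 < V z := fun z => by positivity
  have hVd : ∀ z, HasFDerivAt V ((2 * p z) • fderiv ℝ p z + (2 * q z) • fderiv ℝ q z) z := by
    intro z
    refine ((((hp z).hasFDerivAt.pow 2).const_add 1).add ((hq z).hasFDerivAt.pow 2)).congr_fderiv ?_
    ext <;> simp
  have hWpos : ∀ z, 0 < √(V z) := fun z => Real.sqrt_pos.2 (hVpos z)
  have hWsq : ∀ z, √(V z) ^ 2 = 1 + p z ^ 2 + q z ^ 2 := fun z => Real.sq_sqrt (hVpos z).le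
  have hrd : ∀ z, HasFDerivAt (fun z => (1 + p z ^ 2) / √(V z)) _ z := fun z =>
    div_sqrt_deriv (((hp z).hasFDerivAt.pow 2).const_add 1) (hVd z) (hVpos z)
  have htd : ∀ z, HasFDerivAt (fun z => (1 + q z ^ 2) / √(V z)) _ z := fun z =>
    div_sqrt_deriv (((hq z).hasFDerivAt.pow 2).const_add 1) (hVd z) (hVpos z)
  have hsd : ∀ z, HasFDerivAt (fun z => (p z * q z) / √(V z)) _ z := fun z =>
    div_sqrt_deriv ((hp z).hasFDerivAt.mul (hq z).hasFDerivAt) (hVd z) (hVpos z)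
  have ea : ∀ z, fderiv ℝ p z (1, 0) = uxx u z := fun z => rfl
  have eb : ∀ z, fderiv ℝ p z (0, 1) = uxy u z := fun z => rfl
  have ec : ∀ z, fderiv ℝ q z (0, 1) = uyy u z := fun z => rfl
  obtain ⟨F, hF⟩ := poincare_plane _ _ (fun z => (hrd z).differentiableAt)
    (fun z => (hsd z).differentiableAt) (by
      intro z
      rw [(hrd z).fderiv, (hsd z).fderiv]
      simp [ea, eb, ec, hsymm]
      have := (hWpos z).ne'
      field_simp
      simp only [hWsq]
      linear_combination (- q z) * hmse z)
  obtain ⟨G, hG⟩ := poincare_plane _ _ (fun z => (hsd z).differentiableAt)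
    (fun z => (htd z).differentiableAt) (by
      intro z
      rw [(htd z).fderiv, (hsd z).fderiv]
      simp [ea, eb, ec, hsymm]
      have := (hWpos z).ne'
      field_simp
      simp only [hWsq]
      linear_combination (p z) * hmse z)
  obtain ⟨α, β, hab⟩ := jorgens_const (fun z => by
      have := (hWpos z).ne'
      field_simp
      rw [hWsq]; ring) (fun z => div_pos (by positivity) (hWpos z))
    (continuous_iff_continuousAt.2 fun z => (hrd z).continuousAt)
    (continuous_iff_continuousAt.2 fun z => (hsd z).continuousAt)
    (continuous_iff_continuousAt.2 fun z => (htd z).continuousAt) hF hG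
  have hden : ∀ z, 2 + (1 + p z ^ 2) / √(V z) + (1 + q z ^ 2) / √(V z)
      = (√(V z) + 1) ^ 2 / √(V z) := fun z => by
    have := (hWpos z).ne'
    field_simp
    linear_combination - hWsq z
  have hα : ∀ z, q z ^ 2 - p z ^ 2 = α * (√(V z) + 1) ^ 2 := fun z => by
    have h1 := (hab z).1
    have := hWpos z
    rw [hden] at h1
    rw [← h1]; field_simp; ring
  have hβ : ∀ z, 2 * (p z * q z) = β * (√(V z) + 1) ^ 2 := fun z => by
    have h1 := (hab z).2
    have := hWpos z
    rw [hden] at h1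
    rw [← h1]; field_simp
  have hW1 : ∀ z, (√(V z) - 1) ^ 2 = (α ^ 2 + β ^ 2) * (√(V z) + 1) ^ 2 := fun z => by
    have h1 := hWpos z
    have h2 : (√(V z) - 1) ^ 2 * (√(V z) + 1) ^ 2
        = (α ^ 2 + β ^ 2) * (√(V z) + 1) ^ 2 * (√(V z) + 1) ^ 2 := by
      have e1 : (√(V z) - 1) ^ 2 * (√(V z) + 1) ^ 2 = (p z ^ 2 + q z ^ 2) ^ 2 := by
        have : (√(V z) - 1) * (√(V z) + 1) = p z ^ 2 + q z ^ 2 := by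
          linear_combination hWsq z
        rw [← mul_pow, this]
      rw [e1]
      linear_combination (q z ^ 2 - p z ^ 2 + α * (√(V z) + 1) ^ 2) * hα z
        + (2 * (p z * q z) + β * (√(V z) + 1) ^ 2) * hβ z
    exact mul_right_cancel₀ (by positivity) h2
  have hWge : ∀ z, 1 ≤ √(V z) := fun z => by
    rw [Real.one_le_sqrt]; simp only [hV]; nlinarith [sq_nonneg (p z), sq_nonneg (q z)]
  have hWconst : ∀ z w, √(V z) = √(V w) := fun z w => by
    have h1 := hWge z
    have h2 := hWge w
    have h3 : ((√(V z) - 1) * (√(V w) + 1)) ^ 2 = ((√(V w) - 1) * (√(V z) + 1)) ^ 2 := by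
      rw [mul_pow, mul_pow, hW1, hW1]; ring
    have h4 := (sq_eq_sq₀ (mul_nonneg (by linarith) (by linarith))
      (mul_nonneg (by linarith) (by linarith))).1 h3
    linarith
  have hp2 : ∀ z w, p z ^ 2 = p w ^ 2 := fun z w => by
    have h1 := hWsq z
    have h2 := hWsq w
    have h3 := hα z
    have h4 := hα w
    rw [hWconst z w] at h1 h3
    linarith
  have hq2 : ∀ z w, q z ^ 2 = q w ^ 2 := fun z w => by
    have h1 := hWsq z
    have h2 := hWsq w
    rw [hWconst z w] at h1
    linarith [hp2 z w]
  have key : ∀ g : ℝ × ℝ → ℝ, Continuous g → (∀ z w, g z ^ 2 = g w ^ 2) → ∀ z, g z = g 0 := by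
    intro g hg h z
    by_cases h0 : g 0 = 0
    · have := h z 0
      rw [h0] at this ⊢
      simpa using this
    · exact isPreconnected_univ.eq_of_sq_eq hg.continuousOn continuousOn_const
        (fun x _ => h x 0) (fun _ => h0) (Set.mem_univ 0) rfl (Set.mem_univ z)
  exact ⟨p 0, q 0, fun z => ⟨key p hpc hp2 z, key q hqc hq2 z⟩⟩

/-- **Bernstein's theorem**: every entire `C²` solution of the minimal surface equation
over `ℝ²` is affine linear. -/
theorem bernstein_minimal_surface (u : ℝ × ℝ → ℝ) (hu : ContDiff ℝ 2 u)
    (hmse : ∀ p : ℝ × ℝ,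
      (1 + uy u p ^ 2) * uxx u p - 2 * ux u p * uy u p * uxy u p
        + (1 + ux u p ^ 2) * uyy u p = 0) :
    ∃ a b c : ℝ, ∀ x y : ℝ, u (x, y) = a * x + b * y + c := by
  obtain ⟨a, b, hab⟩ := mse_core u hu hmse
  refine ⟨a, b, u 0, fun x y => ?_⟩
  have hd : ∀ z, HasFDerivAt (fun z => u z - linForm a b z) (0 : ℝ × ℝ →L[ℝ] ℝ) z := by
    intro z
    have h1 : HasFDerivAt u (linForm a b) z := by
      have := ((hu.differentiable (by norm_num)) z).hasFDerivAt
      rw [clm_eq (fderiv ℝ u z)] at this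
      have e := hab z
      unfold ux uy at e
      rwa [e.1, e.2] at this
    refine (h1.sub (linForm a b).hasFDerivAt).congr_fderiv (sub_self _)
  have := is_const_of_fderiv_eq_zero (𝕜 := ℝ) (fun z => (hd z).differentiableAt)
    (fun z => (hd z).fderiv) (x, y) 0
  simp [linForm_apply] at this
  linarith
end

section
/- Let u : ℝⁿ → ℝ be a C² function satisfying the minimal surface equation div(Du / √(1 + |Du|²)) = 0 at every point of ℝⁿ, and suppose its gradient is bounded: there is M ∈ ℝ with |Du(x)| ≤ M for all x ∈ ℝⁿ. Then u is affine linear. -/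
open scoped RealInnerProductSpace

/-- `j`-th first partial derivative of `u : ℝⁿ → ℝ`. -/
noncomputable def pd {n : ℕ} (u : EuclideanSpace ℝ (Fin n) → ℝ)
    (x : EuclideanSpace ℝ (Fin n)) (j : Fin n) : ℝ :=
  fderiv ℝ u x (EuclideanSpace.single j 1)

/-- Second partial derivative `u_{x_j x_k}` of `u : ℝⁿ → ℝ`. -/
noncomputable def pd2 {n : ℕ} (u : EuclideanSpace ℝ (Fin n) → ℝ)
    (x : EuclideanSpace ℝ (Fin n)) (j k : Fin n) : ℝ :=
  fderiv ℝ (fun y => fderiv ℝ u y (EuclideanSpace.single j 1)) x (EuclideanSpace.single k 1)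

open MeasureTheory


/-- Euclidean space. -/
abbrev Eu (n : ℕ) := EuclideanSpace ℝ (Fin n)

theorem Eu_lintegral_affine {n : ℕ} (g : Eu n → ENNReal) (hg : Measurable g) (t : ℝ)
    (ht : 1 / 2 ≤ t) (z : Eu n) :
    ∫⁻ x, g (t • x + z) ≤ ENNReal.ofReal (2 ^ n) * ∫⁻ x, g x := by
  have ht0 : t ≠ 0 := by linarith
  have h1 : ∫⁻ x, g (t • x + z) = ∫⁻ x, g (x + z) ∂(Measure.map (fun x : Eu n => t • x) volume) := by
    rw [lintegral_map (f := fun x => g (x + z)) (hg.comp (measurable_id.add_const z)) (measurable_const_smul t)]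
  rw [h1, Measure.map_addHaar_smul _ ht0, lintegral_smul_measure, lintegral_add_right_eq_self]
  rw [smul_eq_mul]
  gcongr
  rw [finrank_euclideanSpace_fin, ← inv_pow, abs_of_nonneg (by positivity)]
  gcongr
  rw [inv_le_comm₀ (by linarith) (by norm_num)]
  linarith

theorem sq_sub_le_lintegral {n : ℕ} (F : Eu n → ℝ) (hF : ContDiff ℝ 1 F) (x y : Eu n) :
    ENNReal.ofReal ((F x - F y) ^ 2) ≤ ENNReal.ofReal (‖x - y‖ ^ 2) *
      ∫⁻ t in Set.Icc (0:ℝ) 1, ENNReal.ofReal (‖fderiv ℝ F (t • x + (1 - t) • y)‖ ^ 2) := by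
  have hcl : Continuous (fun t : ℝ => t • x + (1 - t) • y) := by fun_prop
  have hcf : Continuous (fun t : ℝ => fderiv ℝ F (t • x + (1 - t) • y)) :=
    (hF.continuous_fderiv one_ne_zero).comp hcl
  have hd : ∀ t : ℝ, HasDerivAt (fun t : ℝ => F (t • x + (1 - t) • y))
      (fderiv ℝ F (t • x + (1 - t) • y) (x - y)) t := by
    intro t
    have h1 : HasDerivAt (fun t : ℝ => t • x + (1 - t) • y) (x - y) t := by
      have := ((hasDerivAt_id t).smul_const x).add
        (((hasDerivAt_id t).const_sub 1).smul_const y)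
      have he : (1:ℝ) • x + (-1:ℝ) • y = x - y := by
        rw [one_smul, neg_one_smul, sub_eq_add_neg]
      rw [← he]
      exact this
    exact ((hF.differentiable one_ne_zero _).hasFDerivAt).comp_hasDerivAt t h1
  have hc1 : Continuous (fun t : ℝ => fderiv ℝ F (t • x + (1 - t) • y) (x - y)) :=
    hcf.clm_apply continuous_const
  have hftc : ∫ t in (0:ℝ)..1, fderiv ℝ F (t • x + (1 - t) • y) (x - y) = F x - F y := by
    rw [intervalIntegral.integral_eq_sub_of_hasDerivAt (fun t _ => hd t)
      (hc1.intervalIntegrable _ _)]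
    simp
  -- for any constant, variance positivity
  set d := F x - F y
  have hc2 : Continuous (fun t : ℝ => ‖x - y‖ ^ 2 * ‖fderiv ℝ F (t • x + (1 - t) • y)‖ ^ 2) := by
    fun_prop
  have hle : d ^ 2 ≤ ∫ t in (0:ℝ)..1, ‖x - y‖ ^ 2 * ‖fderiv ℝ F (t • x + (1 - t) • y)‖ ^ 2 := by
    have h2 : ∫ t in (0:ℝ)..1, (2 * d * (fderiv ℝ F (t • x + (1 - t) • y) (x - y)) - d ^ 2) = d ^ 2 := by
      rw [intervalIntegral.integral_sub ((hc1.const_mul _).intervalIntegrable _ _) (by simp),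
        intervalIntegral.integral_const_mul, hftc]
      simp; ring
    rw [← h2]
    apply intervalIntegral.integral_mono_on (by norm_num)
      (Continuous.intervalIntegrable (by fun_prop) _ _) (hc2.intervalIntegrable _ _)
    intro t _
    have h3 := (fderiv ℝ F (t • x + (1 - t) • y)).le_opNorm (x - y)
    rw [Real.norm_eq_abs] at h3
    have h4 := sq_le_sq' (by linarith [abs_nonneg ((fderiv ℝ F (t • x + (1 - t) • y)) (x - y)), neg_abs_le ((fderiv ℝ F (t • x + (1 - t) • y)) (x - y))]) ((le_abs_self _).trans h3)
    nlinarith [sq_nonneg (d - fderiv ℝ F (t • x + (1 - t) • y) (x - y))]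
  calc ENNReal.ofReal (d ^ 2) ≤ _ := ENNReal.ofReal_le_ofReal hle
    _ = _ := by
      rw [intervalIntegral.integral_const_mul, ENNReal.ofReal_mul (by positivity)]
      congr 1
      rw [intervalIntegral.integral_of_le (by norm_num), ← integral_Icc_eq_integral_Ioc]
      apply ofReal_integral_eq_lintegral_ofReal
      · exact (Continuous.integrableOn_Icc (by fun_prop))
      · exact Filter.Eventually.of_forall fun t => by positivity

theorem Eu_poincare {n : ℕ} (F : Eu n → ℝ) (hF : ContDiff ℝ 1 F) (R : ℝ) :
    ∫⁻ x in Metric.ball (0 : Eu n) R, ∫⁻ y in Metric.ball (0 : Eu n) R,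
        ENNReal.ofReal ((F x - F y) ^ 2)
      ≤ ENNReal.ofReal ((2 * R) ^ 2) * (ENNReal.ofReal (2 ^ n) * volume (Metric.ball (0 : Eu n) R) *
        ∫⁻ x in Metric.ball (0 : Eu n) R, ENNReal.ofReal (‖fderiv ℝ F x‖ ^ 2)) := by
  set B := Metric.ball (0 : Eu n) R with hB
  have hBm : MeasurableSet B := Metric.isOpen_ball.measurableSet
  have hcont : Continuous (fun x => ENNReal.ofReal (‖fderiv ℝ F x‖ ^ 2)) :=
    ENNReal.continuous_ofReal.comp ((hF.continuous_fderiv one_ne_zero).norm.pow 2)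
  set g : Eu n → ENNReal := B.indicator (fun x => ENNReal.ofReal (‖fderiv ℝ F x‖ ^ 2)) with hg
  have hgm : Measurable g := hcont.measurable.indicator hBm
  have hpt : ∀ x ∈ B, ∀ y ∈ B, ENNReal.ofReal ((F x - F y) ^ 2) ≤ ENNReal.ofReal ((2 * R) ^ 2) *
      ∫⁻ t in Set.Icc (0:ℝ) 1, g (t • x + (1 - t) • y) := by
    intro x hx y hy
    refine (sq_sub_le_lintegral F hF x y).trans ?_
    have hx' : ‖x‖ < R := by simpa [hB] using hx
    have hy' : ‖y‖ < R := by simpa [hB] using hy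
    have hn : ‖x - y‖ ≤ 2 * R := (norm_sub_le _ _).trans (by linarith)
    gcongr ?_ * ?_
    · gcongr
    · apply setLIntegral_mono' measurableSet_Icc
      intro t ht
      have hmem : t • x + (1 - t) • y ∈ B :=
        (convex_ball (0 : Eu n) R) hx hy ht.1 (by linarith [ht.2]) (by ring)
      rw [hg, Set.indicator_of_mem hmem]
  have hm3 : Measurable (fun q : (Eu n × Eu n) × ℝ => g (q.2 • q.1.1 + (1 - q.2) • q.1.2)) := by
    apply hgm.comp
    fun_prop
  have hslice : ∀ t ∈ Set.Icc (0:ℝ) 1, ∫⁻ x in B, ∫⁻ y in B, g (t • x + (1 - t) • y) ≤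
      ENNReal.ofReal (2 ^ n) * volume B * ∫⁻ x, g x := by
    have key : ∀ t : ℝ, 1/2 ≤ t → ∫⁻ y in B, ∫⁻ x in B, g (t • x + (1 - t) • y) ≤
        ENNReal.ofReal (2 ^ n) * volume B * ∫⁻ x, g x := by
      intro t ht
      calc ∫⁻ y in B, ∫⁻ x in B, g (t • x + (1 - t) • y)
          ≤ ∫⁻ y in B, ENNReal.ofReal (2 ^ n) * ∫⁻ x, g x := by
            apply lintegral_mono
            intro y
            exact (setLIntegral_le_lintegral _ _).trans (Eu_lintegral_affine g hgm t ht _)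
        _ = _ := by rw [setLIntegral_const]; ring
    intro t ht
    by_cases h : 1 / 2 ≤ t
    · rw [lintegral_lintegral_swap]
      · exact key t h
      · exact (hm3.comp (measurable_id.prodMk measurable_const)).aemeasurable
    · have := key (1 - t) (by linarith)
      convert this using 5
      rw [sub_sub_cancel, add_comm]
  calc ∫⁻ x in B, ∫⁻ y in B, ENNReal.ofReal ((F x - F y) ^ 2)
      ≤ ∫⁻ x in B, ∫⁻ y in B, ENNReal.ofReal ((2 * R) ^ 2) *
        ∫⁻ t in Set.Icc (0:ℝ) 1, g (t • x + (1 - t) • y) :=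
        setLIntegral_mono' hBm fun x hx => setLIntegral_mono' hBm fun y hy => hpt x hx y hy
    _ = ENNReal.ofReal ((2 * R) ^ 2) * ∫⁻ q, (∫⁻ t in Set.Icc (0:ℝ) 1,
        g (t • q.1 + (1 - t) • q.2)) ∂((volume.restrict B).prod (volume.restrict B)) := by
        rw [← lintegral_const_mul _ (Measurable.lintegral_prod_right' hm3)]
        rw [lintegral_prod]
        exact ((Measurable.lintegral_prod_right' hm3).const_mul _).aemeasurable
    _ = ENNReal.ofReal ((2 * R) ^ 2) * ∫⁻ t in Set.Icc (0:ℝ) 1, ∫⁻ q,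
        g (t • q.1 + (1 - t) • q.2) ∂((volume.restrict B).prod (volume.restrict B)) := by
        rw [lintegral_lintegral_swap hm3.aemeasurable]
    _ = ENNReal.ofReal ((2 * R) ^ 2) * ∫⁻ t in Set.Icc (0:ℝ) 1, ∫⁻ x in B, ∫⁻ y in B,
        g (t • x + (1 - t) • y) := by
        congr 1
        apply lintegral_congr
        intro t
        rw [lintegral_prod]
        exact (hm3.comp (measurable_id.prodMk measurable_const)).aemeasurable
    _ ≤ ENNReal.ofReal ((2 * R) ^ 2) * ∫⁻ t in Set.Icc (0:ℝ) 1,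
          ENNReal.ofReal (2 ^ n) * volume B * ∫⁻ x, g x := by
        refine mul_le_mul_right ?_ _
        exact setLIntegral_mono' measurableSet_Icc hslice
    _ = _ := by
        rw [setLIntegral_const, hg, lintegral_indicator hBm]
        simp


/-- `w` solves `div V = 0` weakly, where the field `V` is comparable to the gradient of `w`. -/
structure WSol {n : ℕ} (lam Lam : ℝ) (w : Eu n → ℝ) (V : Eu n → Eu n) : Prop where
  smooth : ContDiff ℝ 1 w
  cont : Continuous V
  ell : ∀ x, lam * ‖fderiv ℝ w x‖ ^ 2 ≤ fderiv ℝ w x (V x)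
  bd : ∀ x, ‖V x‖ ≤ Lam * ‖fderiv ℝ w x‖
  weak : ∀ φ : Eu n → ℝ, ContDiff ℝ 1 φ → HasCompactSupport φ → ∫ x, fderiv ℝ φ x (V x) = 0

/-- The equation satisfied by `F = - log w`, where `U = - V / w`. -/
structure LSol {n : ℕ} (lam Lam : ℝ) (F : Eu n → ℝ) (U : Eu n → Eu n) : Prop where
  smooth : ContDiff ℝ 1 F
  cont : Continuous U
  ell : ∀ x, lam * ‖fderiv ℝ F x‖ ^ 2 ≤ fderiv ℝ F x (U x)
  bd : ∀ x, ‖U x‖ ≤ Lam * ‖fderiv ℝ F x‖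
  weak : ∀ ψ : Eu n → ℝ, ContDiff ℝ 1 ψ → HasCompactSupport ψ →
    ∫ x, (fderiv ℝ ψ x (U x) + ψ x * fderiv ℝ F x (U x)) = 0

theorem WSol.affine {n : ℕ} {lam Lam : ℝ} {w : Eu n → ℝ} {V : Eu n → Eu n}
    (h : WSol lam Lam w V) (a b : ℝ) :
    WSol lam Lam (fun x => a * w x + b) (fun x => a • V x) := by
  have hd : ∀ x, fderiv ℝ (fun x => a * w x + b) x = a • fderiv ℝ w x := by
    intro x
    exact (((h.smooth.differentiable one_ne_zero x).hasFDerivAt.const_mul a).add_const b).fderiv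
  refine ⟨by have := h.smooth; fun_prop, by have := h.cont; fun_prop, ?_, ?_, ?_⟩
  · intro x
    rw [hd, norm_smul, mul_pow, Real.norm_eq_abs, sq_abs]
    simp only [smul_apply, map_smul, smul_eq_mul]
    nlinarith [mul_le_mul_of_nonneg_left (h.ell x) (sq_nonneg a)]
  · intro x
    rw [hd, norm_smul, norm_smul]
    nlinarith [mul_le_mul_of_nonneg_left (h.bd x) (norm_nonneg a)]
  · intro φ h1 h2
    simp only [map_smul, smul_eq_mul]
    rw [integral_const_mul, h.weak φ h1 h2, mul_zero]

theorem WSol.scale {n : ℕ} {lam Lam : ℝ} {w : Eu n → ℝ} {V : Eu n → Eu n}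
    (h : WSol lam Lam w V) {R : ℝ} (hR : 0 < R) :
    WSol lam Lam (fun x => w (R • x)) (fun x => R • V (R • x)) := by
  have hd : ∀ (f : Eu n → ℝ) (_ : ContDiff ℝ 1 f) (r : ℝ) (x : Eu n),
      fderiv ℝ (fun x => f (r • x)) x = r • fderiv ℝ f (r • x) := by
    intro f hf r x
    exact fderiv_comp_smul r
  refine ⟨by have := h.smooth; fun_prop, by have := h.cont; fun_prop, ?_, ?_, ?_⟩
  · intro x
    rw [hd w h.smooth, norm_smul, mul_pow, Real.norm_eq_abs, sq_abs]
    simp only [smul_apply, map_smul, smul_eq_mul]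
    nlinarith [mul_le_mul_of_nonneg_left (h.ell (R • x)) (sq_nonneg R)]
  · intro x
    rw [hd w h.smooth, norm_smul, norm_smul]
    nlinarith [mul_le_mul_of_nonneg_left (h.bd (R • x)) (norm_nonneg R)]
  · intro φ h1 h2
    have h3 : ContDiff ℝ 1 (fun x => φ (R⁻¹ • x)) := by fun_prop
    have h4 : HasCompactSupport (fun x => φ (R⁻¹ • x)) :=
      h2.comp_smul (inv_ne_zero hR.ne')
    have h5 := h.weak _ h3 h4
    have h6 := Measure.integral_comp_smul volume
      (fun x => fderiv ℝ (fun x => φ (R⁻¹ • x)) x (V x)) R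
    rw [h5, smul_zero] at h6
    simp only [map_smul, smul_eq_mul]
    rw [integral_const_mul]
    simp_rw [hd φ h1 R⁻¹] at h6
    simp only [smul_apply, smul_eq_mul, inv_smul_smul₀ hR.ne'] at h6
    rw [integral_const_mul] at h6
    rcases mul_eq_zero.1 h6 with h7 | h7
    · exact absurd h7 (inv_ne_zero hR.ne')
    · rw [h7, mul_zero]

theorem WSol.log {n : ℕ} {lam Lam : ℝ} {w : Eu n → ℝ} {V : Eu n → Eu n}
    (h : WSol lam Lam w V) (hw : ∀ x, 0 < w x) :
    LSol lam Lam (fun x => - Real.log (w x)) (fun x => (-(w x)⁻¹) • V x) := by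
  have hne : ∀ x, w x ≠ 0 := fun x => (hw x).ne'
  have hd : ∀ x, fderiv ℝ (fun x => - Real.log (w x)) x = (-(w x)⁻¹) • fderiv ℝ w x := by
    intro x
    have := (((h.smooth.differentiable one_ne_zero x).hasFDerivAt.log (hne x)).neg).fderiv
    rw [neg_smul]; exact this
  have hs := h.smooth
  have hc := h.cont
  have hcw := hs.continuous
  refine ⟨(hs.log hne).neg, ((hcw.inv₀ hne).neg).smul hc, ?_, ?_, ?_⟩
  · intro x
    rw [hd, norm_smul, mul_pow, Real.norm_eq_abs, sq_abs]
    simp only [smul_apply, map_smul, smul_eq_mul]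
    nlinarith [mul_le_mul_of_nonneg_left (h.ell x) (sq_nonneg (w x)⁻¹)]
  · intro x
    rw [hd, norm_smul, norm_smul]
    nlinarith [mul_le_mul_of_nonneg_left (h.bd x) (norm_nonneg (-(w x)⁻¹))]
  · intro ψ h1 h2
    have h3 : ContDiff ℝ 1 (fun x => ψ x * (w x)⁻¹) := h1.mul (hs.inv hne)
    have h4 : HasCompactSupport (fun x => ψ x * (w x)⁻¹) := h2.mul_right
    have h5 := h.weak _ h3 h4
    have h6 : ∀ x, fderiv ℝ ψ x ((-(w x)⁻¹) • V x) +
        ψ x * fderiv ℝ (fun x => - Real.log (w x)) x ((-(w x)⁻¹) • V x) =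
        - fderiv ℝ (fun x => ψ x * (w x)⁻¹) x (V x) := by
      intro x
      have h7 : HasFDerivAt (fun x => (w x)⁻¹) (-(w x ^ 2)⁻¹ • fderiv ℝ w x) x := by
        have := (hasDerivAt_inv (hne x)).comp_hasFDerivAt x
          (h.smooth.differentiable one_ne_zero x).hasFDerivAt
        exact this
      have h8 := ((h1.differentiable one_ne_zero x).hasFDerivAt.mul h7).fderiv
      have h8' : fderiv ℝ (fun x => ψ x * (w x)⁻¹) x = _ := h8
      rw [hd, h8']
      simp only [smul_apply, add_apply, map_smul, smul_eq_mul]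
      have := hne x
      field_simp
      ring
    simp_rw [h6]
    rw [integral_neg, h5, neg_zero]

theorem LSol.log_est {n : ℕ} {lam Lam : ℝ} {F : Eu n → ℝ} {U : Eu n → Eu n}
    (h : LSol lam Lam F U) (hlam : 0 < lam) (hLam : 0 ≤ Lam) (ζ : Eu n → ℝ)
    (hζ : ContDiff ℝ 1 ζ) (hζc : HasCompactSupport ζ) :
    ∫ x, ζ x ^ 2 * ‖fderiv ℝ F x‖ ^ 2 ≤ (4 * Lam ^ 2 / lam ^ 2) * ∫ x, ‖fderiv ℝ ζ x‖ ^ 2 := by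
  have hcF := h.smooth.continuous_fderiv one_ne_zero
  have hcζ := hζ.continuous_fderiv one_ne_zero
  have hcU := h.cont
  have hcζ0 := hζ.continuous
  have hψ : ContDiff ℝ 1 (fun x => ζ x ^ 2) := hζ.pow 2
  have hψc : HasCompactSupport (fun x => ζ x ^ 2) := by
    have : HasCompactSupport (fun x => ζ x * ζ x) := hζc.mul_right
    simpa [sq] using this
  have hd : ∀ x, fderiv ℝ (fun x => ζ x ^ 2) x = (2 * ζ x) • fderiv ℝ ζ x := by
    intro x
    have := ((hζ.differentiable one_ne_zero x).hasFDerivAt.pow 2).fderiv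
    simpa using this
  have h0 := h.weak _ hψ hψc
  have hi1 : Integrable (fun x => ζ x ^ 2 * ‖fderiv ℝ F x‖ ^ 2) :=
    Continuous.integrable_of_hasCompactSupport (by fun_prop) hψc.mul_right
  have hi2 : Integrable (fun x => ‖fderiv ℝ ζ x‖ ^ 2) := by
    apply Continuous.integrable_of_hasCompactSupport (by fun_prop)
    have := ((hζc.fderiv ℝ).norm).mul_right (f' := fun x => ‖fderiv ℝ ζ x‖)
    simp_rw [sq]; exact this
  have hi3 : Integrable (fun x => fderiv ℝ (fun x => ζ x ^ 2) x (U x) +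
      ζ x ^ 2 * fderiv ℝ F x (U x)) := by
    apply Continuous.integrable_of_hasCompactSupport
    · simp_rw [hd]
      fun_prop
    · apply HasCompactSupport.add
      · exact (hψc.fderiv ℝ).mono' (fun x hx => subset_tsupport _ (by
          intro h0; apply hx; simp [h0]))
      · exact hψc.mul_right
  have key : ∀ x, lam / 2 * (ζ x ^ 2 * ‖fderiv ℝ F x‖ ^ 2)
      - 2 * Lam ^ 2 / lam * ‖fderiv ℝ ζ x‖ ^ 2 ≤ fderiv ℝ (fun x => ζ x ^ 2) x (U x) +
      ζ x ^ 2 * fderiv ℝ F x (U x) := by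
    intro x
    rw [hd]
    simp only [smul_apply, smul_eq_mul]
    have e1 := h.ell x
    have e2 := (fderiv ℝ ζ x).le_opNorm (U x)
    have e3 := h.bd x
    set A := ‖fderiv ℝ F x‖
    set D := ‖fderiv ℝ ζ x‖
    have hA : 0 ≤ A := norm_nonneg _
    have hD : 0 ≤ D := norm_nonneg _
    have e4 : |fderiv ℝ ζ x (U x)| ≤ D * (Lam * A) :=
      e2.trans (mul_le_mul_of_nonneg_left e3 hD)
    have e5 : |ζ x * fderiv ℝ ζ x (U x)| ≤ |ζ x| * (D * (Lam * A)) := by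
      rw [abs_mul]; exact mul_le_mul_of_nonneg_left e4 (abs_nonneg _)
    have e6 := (abs_le.1 e5).1
    have e7 : lam / 2 * (|ζ x| * A - 2 * Lam / lam * D) ^ 2 =
        lam / 2 * (ζ x ^ 2 * A ^ 2) - 2 * |ζ x| * (D * (Lam * A)) + 2 * Lam ^ 2 / lam * D ^ 2 := by
      rw [← sq_abs (ζ x)]
      field_simp
      ring
    have e8 : 0 ≤ lam / 2 * (|ζ x| * A - 2 * Lam / lam * D) ^ 2 := by positivity
    have e9 := mul_le_mul_of_nonneg_left e1 (sq_nonneg (ζ x))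
    nlinarith
  have h1 := integral_mono ((hi1.const_mul _).sub (hi2.const_mul _)) hi3 key
  simp only [Pi.sub_apply] at h1
  rw [integral_sub (hi1.const_mul _) (hi2.const_mul _), integral_const_mul, integral_const_mul,
    h0] at h1
  have h2 : (4 * Lam ^ 2 / lam ^ 2) * ∫ x, ‖fderiv ℝ ζ x‖ ^ 2 =
      2 / lam * (2 * Lam ^ 2 / lam * ∫ x, ‖fderiv ℝ ζ x‖ ^ 2) := by
    field_simp; ring
  rw [h2]
  calc _ = 2 / lam * (lam / 2 * ∫ x, ζ x ^ 2 * ‖fderiv ℝ F x‖ ^ 2) := by field_simp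
    _ ≤ _ := by
      apply mul_le_mul_of_nonneg_left _ (by positivity)
      linarith


theorem rpow_split {a c : ℝ} (ha : 0 ≤ a) (hc : 2 ≤ c) :
    a ^ c = a ^ (c - 2) * a ^ 2 := by
  have : c = (c - 2) + 2 := by ring
  conv_lhs => rw [this]
  rw [Real.rpow_add_of_nonneg ha (by linarith) (by norm_num)]
  norm_num

theorem rpow_split1 {a c : ℝ} (ha : 0 ≤ a) (hc : 2 ≤ c) :
    a ^ (c - 1) = a ^ (c - 2) * a := by
  have : c - 1 = (c - 2) + 1 := by ring
  rw [this, Real.rpow_add_of_nonneg ha (by linarith) (by norm_num)]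
  norm_num

set_option maxHeartbeats 1000000 in
theorem LSol.grad_est {n : ℕ} {lam Lam L p b : ℝ} {F : Eu n → ℝ} {U : Eu n → Eu n}
    (h : LSol lam Lam F U) (hlam : 0 < lam) (hLam : 0 ≤ Lam) (hF : ∀ x, 0 < F x)
    (η : Eu n → ℝ) (hη : ContDiff ℝ 1 η) (hηc : HasCompactSupport η)
    (hη0 : ∀ x, 0 ≤ η x) (hη1 : ∀ x, η x ≤ 1) (hηL : ∀ x, ‖fderiv ℝ η x‖ ≤ L)
    (hp : 2 ≤ p) (hb : 2 < b) :
    ∫ x, ‖fderiv ℝ (fun x => F x ^ p * η x ^ b) x‖ ≤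
      (p / 2 * (b ^ 2 * (Lam ^ 2 * L ^ 2 / lam ^ 2)) + p / 2 + b * L) *
        ∫ x, F x ^ p * η x ^ (b - 2) := by
  have hcF := h.smooth.continuous_fderiv one_ne_zero
  have hcη := hη.continuous_fderiv one_ne_zero
  have hcU := h.cont
  have hcη0 := hη.continuous
  have hcF0 := h.smooth.continuous
  have hL : 0 ≤ L := (norm_nonneg _).trans (hηL 0)
  have hηr : ∀ c : ℝ, 0 < c → HasCompactSupport (fun x => η x ^ c) := by
    intro c hc
    exact hηc.comp_left (g := fun t : ℝ => t ^ c) (Real.zero_rpow hc.ne')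
  have hηrc : ∀ c : ℝ, 0 < c → Continuous (fun x => η x ^ c) := fun c hc =>
    hcη0.rpow_const (fun x => Or.inr hc.le)
  have hFr : ∀ c : ℝ, ContDiff ℝ 1 (fun x => F x ^ c) := fun c =>
    h.smooth.rpow_const_of_ne (fun x => (hF x).ne')
  have hFrc : ∀ c : ℝ, Continuous (fun x => F x ^ c) := fun c => (hFr c).continuous
  have hηb : ContDiff ℝ 1 (fun x => η x ^ b) := by
    have := hη.rpow_const_of_le (m := 1) (p := b) (by norm_num; linarith)
    simpa using this
  have hdη : ∀ x, HasFDerivAt (fun x => η x ^ b) ((b * η x ^ (b - 1)) • fderiv ℝ η x) x :=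
    fun x => (hη.differentiable one_ne_zero x).hasFDerivAt.rpow_const (Or.inr (by linarith))
  have hdF : ∀ (c : ℝ) x, HasFDerivAt (fun x => F x ^ c) ((c * F x ^ (c - 1)) • fderiv ℝ F x) x :=
    fun c x => (h.smooth.differentiable one_ne_zero x).hasFDerivAt.rpow_const (Or.inl (hF x).ne')
  have hd : ∀ (c : ℝ) x, fderiv ℝ (fun x => F x ^ c * η x ^ b) x =
      F x ^ c • ((b * η x ^ (b - 1)) • fderiv ℝ η x) +
      η x ^ b • ((c * F x ^ (c - 1)) • fderiv ℝ F x) := fun c x =>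
    ((hdF c x).mul (hdη x)).fderiv
  have hψ : ∀ c : ℝ, ContDiff ℝ 1 (fun x => F x ^ c * η x ^ b) := fun c => (hFr c).mul hηb
  have hψc : ∀ c : ℝ, HasCompactSupport (fun x => F x ^ c * η x ^ b) := fun c =>
    (hηr b (by linarith)).mul_left
  have hψd : ∀ c : ℝ, Continuous (fun x => fderiv ℝ (fun x => F x ^ c * η x ^ b) x) := fun c =>
    (hψ c).continuous_fderiv one_ne_zero
  have h0 := h.weak _ (hψ (p - 1)) (hψc (p - 1))
  have hi1 : Integrable (fun x => F x ^ (p - 2) * ‖fderiv ℝ F x‖ ^ 2 * η x ^ b) :=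
    Continuous.integrable_of_hasCompactSupport
      (((hFrc _).mul (hcF.norm.pow 2)).mul hηb.continuous) (hηr b (by linarith)).mul_left
  have hi2 : Integrable (fun x => F x ^ p * η x ^ (b - 2)) :=
    Continuous.integrable_of_hasCompactSupport
      ((hFrc _).mul (hηrc _ (by linarith))) (hηr _ (by linarith)).mul_left
  have hi3 : Integrable (fun x => fderiv ℝ (fun x => F x ^ (p - 1) * η x ^ b) x (U x) +
      (F x ^ (p - 1) * η x ^ b) * fderiv ℝ F x (U x)) := by
    apply Continuous.integrable_of_hasCompactSupport
    · exact ((hψd _).clm_apply hcU).add ((hψ _).continuous.mul (hcF.clm_apply hcU))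
    · apply HasCompactSupport.add
      · exact ((hψc (p - 1)).fderiv ℝ).mono' (fun x hx => subset_tsupport _ (by
          intro h0; apply hx; simp [h0]))
      · exact (hψc _).mul_right
  have hi4 : Integrable (fun x => ‖fderiv ℝ (fun x => F x ^ p * η x ^ b) x‖) :=
    Continuous.integrable_of_hasCompactSupport (hψd _).norm ((hψc _).fderiv ℝ).norm
  have key : ∀ x, lam / 2 * (F x ^ (p - 2) * ‖fderiv ℝ F x‖ ^ 2 * η x ^ b)
      - b ^ 2 * Lam ^ 2 * L ^ 2 / (2 * lam) * (F x ^ p * η x ^ (b - 2)) ≤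
      fderiv ℝ (fun x => F x ^ (p - 1) * η x ^ b) x (U x) +
      (F x ^ (p - 1) * η x ^ b) * fderiv ℝ F x (U x) := by
    intro x
    rw [hd]
    simp only [smul_apply, add_apply, smul_eq_mul]
    have e1 := h.ell x
    have e2 := (fderiv ℝ η x).le_opNorm (U x)
    have e3 := h.bd x
    have e0 := hηL x
    set A := ‖fderiv ℝ F x‖
    set D := ‖fderiv ℝ η x‖
    have hA : 0 ≤ A := norm_nonneg _
    have hD : 0 ≤ D := norm_nonneg _
    have e4 : |fderiv ℝ η x (U x)| ≤ L * (Lam * A) :=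
      e2.trans (mul_le_mul e0 e3 (norm_nonneg _) hL)
    have e6 := (abs_le.1 e4).1
    have hq : p - 1 - 1 = p - 2 := by ring
    rw [hq, rpow_split (hη0 x) hb.le, rpow_split1 (hη0 x) hb.le, rpow_split (hF x).le hp,
      rpow_split1 (hF x).le hp]
    set α := η x ^ (b - 2)
    set β := F x ^ (p - 2)
    have hα : 0 ≤ α := Real.rpow_nonneg (hη0 x) _
    have hβ : 0 ≤ β := Real.rpow_nonneg (hF x).le _
    have ha := hη0 x
    have hf := (hF x).le
    set a := η x
    set f := F x
    set X := fderiv ℝ η x (U x)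
    set Y := fderiv ℝ F x (U x)
    have hY : 0 ≤ Y := le_trans (by positivity) e1
    have e7 : lam / 2 * (a * A - b * Lam * L / lam * f) ^ 2 =
        lam / 2 * (a ^ 2 * A ^ 2) - b * a * f * (L * (Lam * A))
          + b ^ 2 * Lam ^ 2 * L ^ 2 / (2 * lam) * f ^ 2 := by
      field_simp
      ring
    have e8 : 0 ≤ lam / 2 * (a * A - b * Lam * L / lam * f) ^ 2 := by positivity
    have e9 : lam / 2 * (a ^ 2 * A ^ 2) - b ^ 2 * Lam ^ 2 * L ^ 2 / (2 * lam) * f ^ 2 ≤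
        b * a * f * X + a ^ 2 * (p - 1) * Y := by
      have i1 := mul_le_mul_of_nonneg_left e6 (show 0 ≤ b * a * f by positivity)
      have i2 := mul_le_mul_of_nonneg_left e1 (sq_nonneg a)
      have i3 : 0 ≤ (p - 2) * (a ^ 2 * Y) := mul_nonneg (by linarith) (by positivity)
      nlinarith
    have e10 := mul_le_mul_of_nonneg_left e9 (mul_nonneg hα hβ)
    have e11 : 0 ≤ β * f * (α * a ^ 2) * Y := by positivity
    nlinarith
  have key2 : ∀ x, ‖fderiv ℝ (fun x => F x ^ p * η x ^ b) x‖ ≤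
      p / 2 * (F x ^ (p - 2) * ‖fderiv ℝ F x‖ ^ 2 * η x ^ b) +
      (p / 2 + b * L) * (F x ^ p * η x ^ (b - 2)) := by
    intro x
    rw [hd]
    have e0 := hηL x
    have ha := hη0 x
    have hf := (hF x).le
    have hα : 0 ≤ η x ^ (b - 2) := Real.rpow_nonneg (hη0 x) _
    have hβ : 0 ≤ F x ^ (p - 2) := Real.rpow_nonneg (hF x).le _
    refine (norm_add_le _ _).trans ?_
    rw [norm_smul, norm_smul, norm_smul, norm_smul]
    rw [rpow_split (hη0 x) hb.le, rpow_split1 (hη0 x) hb.le, rpow_split (hF x).le hp,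
      rpow_split1 (hF x).le hp]
    rw [Real.norm_of_nonneg (by positivity), Real.norm_of_nonneg (by positivity),
      Real.norm_of_nonneg (by positivity), Real.norm_of_nonneg (by positivity)]
    have h1 := hη1 x
    set A := ‖fderiv ℝ F x‖
    set D := ‖fderiv ℝ η x‖
    have hA : 0 ≤ A := norm_nonneg _
    have hD : 0 ≤ D := norm_nonneg _
    set α := η x ^ (b - 2)
    set β := F x ^ (p - 2)
    set a := η x
    set f := F x
    have j1 : a * D ≤ L := by nlinarith
    have j2 := mul_le_mul_of_nonneg_left j1 (show 0 ≤ b * f ^ 2 by positivity)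
    have j3 : a ^ 2 ≤ 1 := by nlinarith
    have j4 : f * A * a ^ 2 ≤ 1 / 2 * (A ^ 2 * a ^ 2) + 1 / 2 * f ^ 2 := by
      have : 0 ≤ a ^ 2 * (f - A) ^ 2 := by positivity
      nlinarith [mul_le_mul_of_nonneg_left j3 (sq_nonneg f)]
    have j5 := mul_le_mul_of_nonneg_left j4 (show 0 ≤ p by linarith)
    have j6 : b * f ^ 2 * (a * D) + p * (f * A * a ^ 2) ≤ p / 2 * (A ^ 2 * a ^ 2) + (p / 2 + b * L) * f ^ 2 := by
      nlinarith
    have j7 := mul_le_mul_of_nonneg_left j6 (mul_nonneg hα hβ)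
    nlinarith
  have h1 := integral_mono ((hi1.const_mul _).sub (hi2.const_mul _)) hi3 key
  simp only [Pi.sub_apply] at h1
  rw [integral_sub (hi1.const_mul _) (hi2.const_mul _), integral_const_mul, integral_const_mul,
    h0] at h1
  have h2 := integral_mono hi4 ((hi1.const_mul _).add (hi2.const_mul _)) key2
  simp only [Pi.add_apply] at h2
  rw [integral_add (hi1.const_mul _) (hi2.const_mul _), integral_const_mul, integral_const_mul] at h2
  set I := ∫ x, F x ^ (p - 2) * ‖fderiv ℝ F x‖ ^ 2 * η x ^ b
  set J := ∫ x, F x ^ p * η x ^ (b - 2)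
  have h3 : I ≤ b ^ 2 * (Lam ^ 2 * L ^ 2 / lam ^ 2) * J := by
    have h4 : b ^ 2 * (Lam ^ 2 * L ^ 2 / lam ^ 2) * J =
      2 / lam * (b ^ 2 * Lam ^ 2 * L ^ 2 / (2 * lam) * J) := by
      field_simp
    rw [h4]
    calc I = 2 / lam * (lam / 2 * I) := by field_simp
      _ ≤ _ := by
        apply mul_le_mul_of_nonneg_left _ (by positivity)
        linarith
  have h5 := mul_le_mul_of_nonneg_left h3 (show 0 ≤ p / 2 by linarith)
  linarith


theorem Eu_sobolev {n : ℕ} {χ : ℝ} (hχ : (n : ℝ).HolderConjugate χ) :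
    ∃ S : ℝ, 0 ≤ S ∧ ∀ Ψ : Eu n → ℝ, ContDiff ℝ 1 Ψ → HasCompactSupport Ψ → (∀ x, 0 ≤ Ψ x) →
      ∫ x, Ψ x ^ χ ≤ S * (∫ x, ‖fderiv ℝ Ψ x‖) ^ χ := by
  refine ⟨lintegralPowLePowLIntegralFDerivConst (volume : Measure (Eu n)) χ, NNReal.coe_nonneg _, ?_⟩
  intro Ψ h1 h2 h3
  have hχ' : ((Module.finrank ℝ (Eu n) : ℕ) : ℝ).HolderConjugate χ := by
    rwa [finrank_euclideanSpace_fin]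
  have hχ0 : 0 < χ := hχ.symm.pos
  have h := lintegral_pow_le_pow_lintegral_fderiv volume h1 h2 hχ'
  have hi : Integrable (fun x => Ψ x ^ χ) :=
    Continuous.integrable_of_hasCompactSupport (h1.continuous.rpow_const fun x => Or.inr hχ0.le)
      (h2.comp_left (g := fun t : ℝ => t ^ χ) (Real.zero_rpow hχ0.ne'))
  have hi2 : Integrable (fun x => fderiv ℝ Ψ x) :=
    Continuous.integrable_of_hasCompactSupport (h1.continuous_fderiv one_ne_zero) (h2.fderiv ℝ)
  have e1 : ∫⁻ x, ‖Ψ x‖ₑ ^ χ = ENNReal.ofReal (∫ x, Ψ x ^ χ) := by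
    rw [ofReal_integral_eq_lintegral_ofReal hi
      (Filter.Eventually.of_forall fun x => Real.rpow_nonneg (h3 x) _)]
    apply lintegral_congr
    intro x
    rw [Real.enorm_eq_ofReal (h3 x), ENNReal.ofReal_rpow_of_nonneg (h3 x) hχ0.le]
  have h0 : 0 ≤ ∫ x, ‖fderiv ℝ Ψ x‖ := integral_nonneg fun x => norm_nonneg _
  rw [e1, ← ofReal_integral_norm_eq_lintegral_enorm hi2,
    ENNReal.ofReal_rpow_of_nonneg h0 hχ0.le, ← ENNReal.ofReal_coe_nnreal,
    ← ENNReal.ofReal_mul (NNReal.coe_nonneg _)] at h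
  exact (ENNReal.ofReal_le_ofReal_iff (by positivity)).1 h

theorem moser_iter {φ : ℝ → ℝ} {S C χ : ℝ} (hS : 0 ≤ S) (hC : 0 ≤ C) (hχ : 1 < χ)
    (c s K : ℝ) (hs : s = 3 * χ / (χ - 1)) (hc : 1 ≤ c) (hc2 : S * C ^ χ * χ ^ s ≤ c ^ (χ - 1))
    (hK : 0 < K) (hφ0 : ∀ p, 0 ≤ φ p)
    (hφ : ∀ p, 2 ≤ p → φ (χ * p) ≤ S * (C * p ^ 3 * φ p) ^ χ)
    (h2 : φ 2 ≤ K ^ (2:ℝ) / (c * 2 ^ s)) (k : ℕ) :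
    φ (2 * χ ^ k) ≤ K ^ (2 * χ ^ k) / (c * (2 * χ ^ k) ^ s) := by
  have hχ0 : 0 < χ := by linarith
  have hc0 : 0 < c := by linarith
  induction k with
  | zero => simpa using h2
  | succ k ih =>
    set p := 2 * χ ^ k with hp
    have hp2 : 2 ≤ p := by
      have := one_le_pow₀ hχ.le (n := k)
      linarith
    have hp0 : 0 < p := by linarith
    have e : 2 * χ ^ (k + 1) = χ * p := by rw [hp]; ring
    rw [e]
    refine (hφ p hp2).trans ?_
    have h3 : C * p ^ 3 * φ p ≤ C * p ^ 3 * (K ^ p / (c * p ^ s)) :=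
      mul_le_mul_of_nonneg_left ih (by positivity)
    have h4 : (C * p ^ 3 * φ p) ^ χ ≤ (C * p ^ 3 * (K ^ p / (c * p ^ s))) ^ χ :=
      Real.rpow_le_rpow (mul_nonneg (by positivity) (hφ0 p)) h3 hχ0.le
    have h5 : (C * p ^ 3 * (K ^ p / (c * p ^ s))) ^ χ =
        C ^ χ * p ^ (3 * χ) * (K ^ (χ * p) / (c ^ χ * p ^ (s * χ))) := by
      rw [Real.mul_rpow (by positivity) (by positivity), Real.mul_rpow hC (by positivity),
        Real.div_rpow (by positivity) (by positivity), Real.mul_rpow hc0.le (by positivity),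
        ← Real.rpow_mul hp0.le, ← Real.rpow_mul hK.le, ← Real.rpow_natCast p 3,
        ← Real.rpow_mul hp0.le, mul_comm p χ]
      norm_num
    have h6 : s * χ = 3 * χ + s := by
      have : χ - 1 ≠ 0 := by linarith
      rw [hs]; field_simp; ring
    calc S * (C * p ^ 3 * φ p) ^ χ
        ≤ S * (C ^ χ * p ^ (3 * χ) * (K ^ (χ * p) / (c ^ χ * p ^ (s * χ)))) := by
          rw [← h5]; exact mul_le_mul_of_nonneg_left h4 hS
      _ = (S * C ^ χ * χ ^ s) * (K ^ (χ * p) / (c ^ χ * (χ ^ s * p ^ s))) := by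
          rw [h6, Real.rpow_add hp0]
          have : p ^ (3 * χ) ≠ 0 := by positivity
          have : χ ^ s ≠ 0 := by positivity
          field_simp
      _ ≤ c ^ (χ - 1) * (K ^ (χ * p) / (c ^ χ * (χ ^ s * p ^ s))) :=
          mul_le_mul_of_nonneg_right hc2 (by positivity)
      _ = _ := by
          rw [Real.mul_rpow hχ0.le hp0.le, Real.rpow_sub hc0, Real.rpow_one]
          field_simp

theorem LSol.sup_bound {n : ℕ} (hn : 2 ≤ n) {lam Lam : ℝ} (hlam : 0 < lam) (hLam : 0 ≤ Lam)
    (η : Eu n → ℝ) (hη : ContDiff ℝ 1 η) (hηc : HasCompactSupport η)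
    (hη0 : ∀ x, 0 ≤ η x) (hη1 : ∀ x, η x ≤ 1) (hηB : ∀ x ∈ Metric.ball (0 : Eu n) 1, η x = 1)
    (I : ℝ) :
    ∃ K : ℝ, ∀ (F : Eu n → ℝ) (U : Eu n → Eu n), LSol lam Lam F U → (∀ x, 0 < F x) →
      (∫ x, F x ^ 2 * η x ^ 2 ≤ I) → ∀ x ∈ Metric.ball (0 : Eu n) 1, F x ≤ K := by
  have hn1 : (1:ℝ) < n := by exact_mod_cast (by omega : 1 < n)
  obtain ⟨L, hηL⟩ : ∃ L : ℝ, ∀ x, ‖fderiv ℝ η x‖ ≤ L :=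
    (hηc.fderiv ℝ).exists_bound_of_continuous (hη.continuous_fderiv one_ne_zero)
  have hL : 0 ≤ L := (norm_nonneg _).trans (hηL 0)
  set χ : ℝ := n / (n - 1) with hχdef
  have hconj : (n : ℝ).HolderConjugate χ := Real.HolderConjugate.conjExponent hn1
  have hχ : 1 < χ := hconj.symm.lt
  obtain ⟨S, hS, hsob⟩ := Eu_sobolev hconj
  set C : ℝ := (n + 1) ^ 2 * (Lam ^ 2 * L ^ 2 / lam ^ 2) / 2 + 1 / 2 + (n + 1) * L with hCdef
  have hC : 0 ≤ C := by positivity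
  set s : ℝ := 3 * χ / (χ - 1) with hs
  set c : ℝ := (max 1 (S * C ^ χ * χ ^ s)) ^ (1 / (χ - 1)) with hcdef
  have hχ1 : 0 < χ - 1 := by linarith
  have hc : 1 ≤ c := Real.one_le_rpow (le_max_left _ _) (by positivity)
  have hc2 : S * C ^ χ * χ ^ s ≤ c ^ (χ - 1) := by
    rw [hcdef, ← Real.rpow_mul (le_trans zero_le_one (le_max_left _ _)),
      one_div_mul_cancel hχ1.ne', Real.rpow_one]
    exact le_max_right _ _
  have hc0 : 0 < c := by linarith
  set K : ℝ := Real.sqrt (c * 2 ^ s * (|I| + 1)) with hKdef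
  have hK : 0 < K := Real.sqrt_pos.2 (by positivity)
  refine ⟨K, ?_⟩
  intro F U h hF hI
  set φ : ℝ → ℝ := fun p => ∫ x, F x ^ p * η x ^ ((n + 1) * p - 2 * n) with hφdef
  have hφ0 : ∀ p, 0 ≤ φ p := fun p => integral_nonneg fun x =>
    mul_nonneg (Real.rpow_nonneg (hF x).le _) (Real.rpow_nonneg (hη0 x) _)
  have hφ2 : φ 2 ≤ K ^ (2:ℝ) / (c * 2 ^ s) := by
    have e1 : K ^ (2:ℝ) / (c * 2 ^ s) = |I| + 1 := by
      rw [hKdef, Real.rpow_two, Real.sq_sqrt (by positivity)]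
      field_simp
    have e2 : φ 2 = ∫ x, F x ^ 2 * η x ^ 2 := by
      have : ((n:ℝ) + 1) * 2 - 2 * n = 2 := by ring
      simp only [hφdef, this, Real.rpow_two]
    rw [e1, e2]
    linarith [le_abs_self I]
  have hstep : ∀ p, 2 ≤ p → φ (χ * p) ≤ S * (C * p ^ 3 * φ p) ^ χ := by
    intro p hp
    set b : ℝ := (n + 1) * p - 2 * n + 2 with hb
    have hb2 : 2 < b := by rw [hb]; nlinarith
    have hbp : b ≤ (n + 1) * p := by rw [hb]; linarith
    have hg := h.grad_est hlam hLam hF η hη hηc hη0 hη1 hηL hp hb2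
    have hb' : b - 2 = (n + 1) * p - 2 * n := by rw [hb]; ring
    rw [hb'] at hg
    change _ ≤ _ * φ p at hg
    have hηb : ContDiff ℝ 1 (fun x => η x ^ b) := by
      have := hη.rpow_const_of_le (m := 1) (p := b) (by norm_num; linarith)
      simpa using this
    have hs := hsob (fun x => F x ^ p * η x ^ b)
      ((h.smooth.rpow_const_of_ne (fun x => (hF x).ne')).mul hηb)
      (HasCompactSupport.mul_left
        (hηc.comp_left (g := fun t : ℝ => t ^ b) (Real.zero_rpow (by linarith))))
      (fun x => mul_nonneg (Real.rpow_nonneg (hF x).le _) (Real.rpow_nonneg (hη0 x) _))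
    have he : φ (χ * p) = ∫ x, (F x ^ p * η x ^ b) ^ χ := by
      simp only [hφdef]
      congr 1
      ext x
      have hbχ : ((n:ℝ) + 1) * (χ * p) - 2 * n = b * χ := by
        have : (n:ℝ) - 1 ≠ 0 := by linarith
        rw [hb, hχdef]
        field_simp
        ring
      rw [Real.mul_rpow (Real.rpow_nonneg (hF x).le _) (Real.rpow_nonneg (hη0 x) _),
        ← Real.rpow_mul (hF x).le, ← Real.rpow_mul (hη0 x), hbχ, mul_comm p χ]
    rw [he]
    refine hs.trans (mul_le_mul_of_nonneg_left ?_ hS)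
    apply Real.rpow_le_rpow (integral_nonneg fun x => norm_nonneg _) _ (by linarith)
    refine hg.trans (mul_le_mul_of_nonneg_right ?_ (hφ0 p))
    set Q := Lam ^ 2 * L ^ 2 / lam ^ 2 with hQ
    have hQ0 : 0 ≤ Q := by positivity
    have hbsq : b ^ 2 ≤ ((n + 1) * p) ^ 2 := by
      apply pow_le_pow_left₀ (by linarith) hbp
    have i1 : p / 2 * (b ^ 2 * Q) ≤ ((n + 1) ^ 2 * Q / 2) * p ^ 3 := by
      have := mul_le_mul_of_nonneg_left (mul_le_mul_of_nonneg_right hbsq hQ0)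
        (show 0 ≤ p / 2 by linarith)
      refine this.trans (le_of_eq (by ring))
    have hp3 : p ≤ p ^ 3 := le_self_pow₀ (by linarith) (by norm_num)
    have i3 : b * L ≤ (n + 1) * L * p ^ 3 := by
      have := mul_le_mul_of_nonneg_right hbp hL
      have := mul_le_mul_of_nonneg_left hp3 (show 0 ≤ (n + 1) * L by positivity)
      linarith
    rw [hCdef]
    linarith
  have hit := moser_iter hS hC hχ c s K hs hc hc2 hK hφ0 hstep hφ2
  by_contra! hcon
  obtain ⟨x0, hx0, hx0K⟩ := hcon
  obtain ⟨K', hK1, hK2⟩ := exists_between hx0K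
  set O : Set (Eu n) := Metric.ball 0 1 ∩ {x | K' < F x} with hO
  have hOo : IsOpen O := Metric.isOpen_ball.inter (isOpen_lt continuous_const h.smooth.continuous)
  have hOpos : 0 < volume O := hOo.measure_pos volume ⟨x0, hx0, hK2⟩
  have hOfin : volume O < ⊤ := (measure_mono Set.inter_subset_left).trans_lt measure_ball_lt_top
  have hm : 0 < volume.real O := ENNReal.toReal_pos hOpos.ne' hOfin.ne
  have hlow : ∀ p : ℝ, 2 ≤ p → volume.real O * K' ^ p ≤ φ p := by
    intro p hp
    have hIntg : Integrable (fun x => F x ^ p * η x ^ (((n:ℝ) + 1) * p - 2 * n)) := by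
      have hpos : 0 < ((n:ℝ) + 1) * p - 2 * n := by nlinarith
      exact Continuous.integrable_of_hasCompactSupport
        ((h.smooth.continuous.rpow_const fun x => Or.inl (hF x).ne').mul
          (hη.continuous.rpow_const fun x => Or.inr hpos.le))
        (HasCompactSupport.mul_left
          (hηc.comp_left (g := fun t : ℝ => t ^ _) (Real.zero_rpow hpos.ne')))
    calc volume.real O * K' ^ p = ∫ x in O, K' ^ p := by simp
      _ ≤ ∫ x in O, F x ^ p * η x ^ (((n:ℝ) + 1) * p - 2 * n) := by
        apply setIntegral_mono_on (integrableOn_const hOfin.ne) hIntg.integrableOn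
          hOo.measurableSet
        intro x hx
        rw [hηB x hx.1, Real.one_rpow, mul_one]
        exact Real.rpow_le_rpow (by linarith) hx.2.le (by linarith)
      _ ≤ φ p := setIntegral_le_integral hIntg (Filter.Eventually.of_forall fun x =>
        mul_nonneg (Real.rpow_nonneg (hF x).le _) (Real.rpow_nonneg (hη0 x) _))
  -- growth contradiction
  have hr : 1 < K' / K := (one_lt_div hK).2 hK1
  have htend : Filter.Tendsto (fun k : ℕ => (K' / K) ^ (2 * χ ^ k)) Filter.atTop Filter.atTop := by
    have h1 : Filter.Tendsto (fun k : ℕ => 2 * χ ^ k) Filter.atTop Filter.atTop :=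
      (tendsto_pow_atTop_atTop_of_one_lt hχ).const_mul_atTop (by norm_num)
    exact (tendsto_rpow_atTop_of_base_gt_one _ hr).comp h1
  obtain ⟨k, hk⟩ := (htend.eventually_gt_atTop (1 / volume.real O)).exists
  set p := 2 * χ ^ k with hp
  have hp2 : 2 ≤ p := by
    have := one_le_pow₀ hχ.le (n := k)
    linarith
  have h1 := hlow p hp2
  have h2 := hit k
  rw [← hp] at h2
  have hKp : 0 < K ^ p := by positivity
  have h3 : K ^ p / (c * p ^ s) ≤ K ^ p := by
    apply div_le_self hKp.le
    have : 1 ≤ p ^ s := Real.one_le_rpow (by linarith) (by rw [hs]; positivity)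
    nlinarith
  rw [Real.div_rpow (by linarith) hK.le, div_lt_div_iff₀ hm hKp] at hk
  linarith


theorem LSol.l2_bound {n : ℕ} {lam Lam : ℝ} (hlam : 0 < lam) (hLam : 0 ≤ Lam) :
    ∃ Q : ENNReal, Q ≠ ⊤ ∧ ∀ (F : Eu n → ℝ) (U : Eu n → Eu n), LSol lam Lam F U → (∀ x, 0 < F x) →
      volume (Metric.ball (0 : Eu n) 2) ≤ 2 * volume (Metric.ball (0 : Eu n) 2 ∩ {x | F x ≤ 1}) →
      ∫⁻ x in Metric.ball (0 : Eu n) 2, ENNReal.ofReal (F x ^ 2) ≤ Q := by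
  let ζ : ContDiffBump (0 : Eu n) := ⟨2, 3, by norm_num, by norm_num⟩
  have hζ : ContDiff ℝ 1 (ζ : Eu n → ℝ) := ζ.contDiff
  have hζc : HasCompactSupport (ζ : Eu n → ℝ) := ζ.hasCompactSupport
  set G : ℝ := (4 * Lam ^ 2 / lam ^ 2) * ∫ x, ‖fderiv ℝ (ζ : Eu n → ℝ) x‖ ^ 2 with hG
  set B := Metric.ball (0 : Eu n) 2 with hB
  have hBm : MeasurableSet B := Metric.isOpen_ball.measurableSet
  have hBpos : volume B ≠ 0 := (Metric.measure_ball_pos volume _ (by norm_num)).ne'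
  have hBfin : volume B ≠ ⊤ := measure_ball_lt_top.ne
  set P : ENNReal := ENNReal.ofReal ((2 * 2) ^ 2) * (ENNReal.ofReal (2 ^ n) * volume B *
    ENNReal.ofReal G) with hP
  have hPfin : P ≠ ⊤ := by
    rw [hP]
    exact ENNReal.mul_ne_top ENNReal.ofReal_ne_top (ENNReal.mul_ne_top
      (ENNReal.mul_ne_top ENNReal.ofReal_ne_top hBfin) ENNReal.ofReal_ne_top)
  refine ⟨(4 * P + 4 * volume B * volume B) / volume B, ?_, ?_⟩
  · apply ENNReal.div_ne_top _ hBpos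
    exact ENNReal.add_ne_top.2 ⟨ENNReal.mul_ne_top (by norm_num) hPfin,
      ENNReal.mul_ne_top (ENNReal.mul_ne_top (by norm_num) hBfin) hBfin⟩
  intro F U h hF hhalf
  have hcF := h.smooth.continuous_fderiv one_ne_zero
  have hcF0 := h.smooth.continuous
  have hgrad : ∫⁻ x in B, ENNReal.ofReal (‖fderiv ℝ F x‖ ^ 2) ≤ ENNReal.ofReal G := by
    have h1 := h.log_est hlam hLam ζ hζ hζc
    have hi : Integrable (fun x => ζ x ^ 2 * ‖fderiv ℝ F x‖ ^ 2) := by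
      apply Continuous.integrable_of_hasCompactSupport
      · exact (hζ.continuous.pow 2).mul (hcF.norm.pow 2)
      · have : HasCompactSupport (fun x => ζ x * (ζ x * ‖fderiv ℝ F x‖ ^ 2)) := hζc.mul_right
        simpa [sq, mul_assoc] using this
    refine le_trans ?_ (ENNReal.ofReal_le_ofReal h1)
    rw [ofReal_integral_eq_lintegral_ofReal hi
      (Filter.Eventually.of_forall fun x => by positivity)]
    refine le_trans ?_ (setLIntegral_le_lintegral B _)
    apply setLIntegral_mono' hBm
    intro x hx
    have : ζ x = 1 := ζ.one_of_mem_closedBall (Metric.ball_subset_closedBall hx)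
    rw [this]
    simp
  have hpoin : ∫⁻ x in B, ∫⁻ y in B, ENNReal.ofReal ((F x - F y) ^ 2) ≤ P := by
    refine (Eu_poincare F h.smooth 2).trans ?_
    rw [hP]
    gcongr
  set A := B ∩ {x | F x ≤ 1} with hA
  have hAm : MeasurableSet A := hBm.inter (isClosed_le hcF0 continuous_const).measurableSet
  set T := ∫⁻ x in B, ENNReal.ofReal (F x ^ 2) with hT
  have h1 : volume A * T ≤ 2 * P + 2 * volume B * volume B := by
    calc volume A * T = ∫⁻ x in B, ∫⁻ y in A, ENNReal.ofReal (F x ^ 2) := by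
          simp_rw [setLIntegral_const]
          rw [lintegral_mul_const _ (by fun_prop), mul_comm]
      _ ≤ ∫⁻ x in B, ∫⁻ y in A, (2 * ENNReal.ofReal ((F x - F y) ^ 2) + 2) := by
          apply lintegral_mono
          intro x
          apply setLIntegral_mono' hAm
          intro y hy
          have hy1 : F y ≤ 1 := hy.2
          have hy0 := hF y
          have e : F x ^ 2 ≤ 2 * (F x - F y) ^ 2 + 2 := by
            nlinarith [sq_nonneg (F x - 2 * F y)]
          refine (ENNReal.ofReal_le_ofReal e).trans (le_of_eq ?_)
          rw [ENNReal.ofReal_add (by positivity) (by norm_num), ENNReal.ofReal_mul (by norm_num)]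
          norm_num
      _ ≤ ∫⁻ x in B, ∫⁻ y in B, (2 * ENNReal.ofReal ((F x - F y) ^ 2) + 2) := by
          apply lintegral_mono
          intro x
          exact lintegral_mono_set Set.inter_subset_left
      _ = ∫⁻ x in B, (2 * (∫⁻ y in B, ENNReal.ofReal ((F x - F y) ^ 2)) + 2 * volume B) := by
          apply lintegral_congr
          intro x
          rw [lintegral_add_right _ measurable_const, setLIntegral_const,
            lintegral_const_mul _ (by fun_prop)]
      _ = 2 * (∫⁻ x in B, ∫⁻ y in B, ENNReal.ofReal ((F x - F y) ^ 2)) +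
            2 * volume B * volume B := by
          rw [lintegral_add_right _ measurable_const, setLIntegral_const, lintegral_const_mul]
          apply Measurable.lintegral_prod_right'
            (f := fun q : Eu n × Eu n => ENNReal.ofReal ((F q.1 - F q.2) ^ 2))
          fun_prop
      _ ≤ _ := by gcongr
  rw [ENNReal.le_div_iff_mul_le (Or.inl hBpos) (Or.inl hBfin)]
  calc T * volume B ≤ T * (2 * volume A) := by gcongr
    _ = 2 * (volume A * T) := by ring
    _ ≤ 2 * (2 * P + 2 * volume B * volume B) := by gcongr
    _ = _ := by ring

theorem WSol.lower_bound {n : ℕ} (hn : 2 ≤ n) {lam Lam : ℝ} (hlam : 0 < lam) (hLam : 0 ≤ Lam) :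
    ∃ c : ℝ, 0 < c ∧ ∀ (w : Eu n → ℝ) (V : Eu n → Eu n), WSol lam Lam w V → (∀ x, 0 < w x) →
      (∀ x, w x < 1) →
      volume (Metric.ball (0 : Eu n) 2) ≤ 2 * volume (Metric.ball (0 : Eu n) 2 ∩ {x | 1 / 2 ≤ w x}) →
      ∀ x ∈ Metric.ball (0 : Eu n) 1, c ≤ w x := by
  obtain ⟨Q, hQ, hl2⟩ := LSol.l2_bound (n := n) hlam hLam
  let η : ContDiffBump (0 : Eu n) := ⟨1, 2, by norm_num, by norm_num⟩
  have hη : ContDiff ℝ 1 (η : Eu n → ℝ) := η.contDiff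
  have hηc : HasCompactSupport (η : Eu n → ℝ) := η.hasCompactSupport
  obtain ⟨K, hK⟩ := LSol.sup_bound hn hlam hLam η hη hηc (fun x => η.nonneg) (fun x => η.le_one)
    (fun x hx => η.one_of_mem_closedBall (Metric.ball_subset_closedBall hx)) Q.toReal
  refine ⟨Real.exp (-K), Real.exp_pos _, ?_⟩
  intro w V h hw0 hw1 hhalf x hx
  have hlog := h.log hw0
  have hpos : ∀ x, 0 < - Real.log (w x) := fun x => by
    have := Real.log_neg (hw0 x) (hw1 x); linarith
  have hT := hl2 _ _ hlog hpos (by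
    refine hhalf.trans ?_
    gcongr 2 * volume (_ ∩ ?_)
    intro y hy
    have hy' : 1 / 2 ≤ w y := hy
    have h1 : Real.log (1 / 2) ≤ Real.log (w y) := Real.log_le_log (by norm_num) hy'
    have h2 : Real.log (1 / 2) = - Real.log 2 := by rw [one_div, Real.log_inv]
    have h3 := Real.log_two_lt_d9
    change - Real.log (w y) ≤ 1
    linarith)
  have hcF := hlog.smooth.continuous
  have hb := hK _ _ hlog hpos (by
    have hi : Integrable (fun x => (- Real.log (w x)) ^ 2 * η x ^ 2) := by
      apply Continuous.integrable_of_hasCompactSupport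
      · exact (hcF.pow 2).mul (hη.continuous.pow 2)
      · have : HasCompactSupport (fun x => ((- Real.log (w x)) ^ 2 * η x) * η x) := hηc.mul_left
        simpa [sq, mul_assoc] using this
    rw [← ENNReal.ofReal_le_iff_le_toReal hQ, ofReal_integral_eq_lintegral_ofReal hi
      (Filter.Eventually.of_forall fun x => by positivity)]
    refine le_trans ?_ hT
    rw [← lintegral_indicator Metric.isOpen_ball.measurableSet]
    apply lintegral_mono
    intro y
    by_cases hy : y ∈ Metric.ball (0 : Eu n) 2
    · rw [Set.indicator_of_mem hy]
      apply ENNReal.ofReal_le_ofReal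
      have h1 : η y ^ 2 ≤ 1 := pow_le_one₀ η.nonneg η.le_one
      exact mul_le_of_le_one_right (sq_nonneg _) h1
    · have h0 : η y = 0 := η.zero_of_le_dist (by
        simp only [Metric.mem_ball, not_lt] at hy; exact hy)
      simp [h0]) x hx
  rw [← Real.exp_log (hw0 x)]
  apply Real.exp_le_exp.2
  linarith

theorem WSol.liouville {n : ℕ} (hn : 2 ≤ n) {lam Lam : ℝ} (hlam : 0 < lam) (hLam : 0 ≤ Lam)
    {w : Eu n → ℝ} {V : Eu n → Eu n} (h : WSol lam Lam w V) {M : ℝ} (hM : ∀ x, |w x| ≤ M) :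
    ∀ x y, w x = w y := by
  obtain ⟨c, hc, hlow⟩ := WSol.lower_bound (n := n) hn hlam hLam
  -- one-sided statement
  have one : ∀ (w : Eu n → ℝ) (V : Eu n → Eu n), WSol lam Lam w V → (∀ x, 0 ≤ w x) →
      (∀ x, w x ≤ 1) → (∀ N : ℝ, ∃ R : ℝ, N ≤ R ∧ 0 < R ∧ volume (Metric.ball (0 : Eu n) 2) ≤
        2 * volume (Metric.ball (0 : Eu n) 2 ∩ {x | 1 / 2 ≤ w (R • x)})) → ∀ x, c ≤ w x := by
    intro w V h h0 h1 hR x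
    obtain ⟨R, hNR, hR0, hvol⟩ := hR (‖x‖ + 1)
    apply le_of_forall_pos_le_add
    intro ε hε
    have hs := (h.scale hR0).affine (1 / (1 + 2 * ε)) (ε / (1 + 2 * ε))
    have hval : ∀ y, 1 / (1 + 2 * ε) * w (R • y) + ε / (1 + 2 * ε) = (w (R • y) + ε) / (1 + 2 * ε) := by
      intro y; ring
    have hx : R⁻¹ • x ∈ Metric.ball (0 : Eu n) 1 := by
      rw [mem_ball_zero_iff, norm_smul, norm_inv, Real.norm_of_nonneg hR0.le,
        inv_mul_lt_iff₀ hR0]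
      linarith
    have := hlow _ _ hs ?_ ?_ ?_ (R⁻¹ • x) hx
    · rw [hval, smul_inv_smul₀ hR0.ne', le_div_iff₀ (by positivity)] at this
      nlinarith
    · intro y
      rw [hval]
      have := h0 (R • y)
      positivity
    · intro y
      rw [hval, div_lt_one (by positivity)]
      linarith [h1 (R • y)]
    · refine hvol.trans ?_
      gcongr 2 * volume (_ ∩ ?_)
      intro y hy
      have hy' : 1 / 2 ≤ w (R • y) := hy
      change 1 / 2 ≤ 1 / (1 + 2 * ε) * w (R • y) + ε / (1 + 2 * ε)
      rw [hval, le_div_iff₀ (by positivity)]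
      linarith
  -- normalisation
  have hba : BddAbove (Set.range w) := ⟨M, by rintro _ ⟨x, rfl⟩; exact (abs_le.1 (hM x)).2⟩
  have hbb : BddBelow (Set.range w) := ⟨-M, by rintro _ ⟨x, rfl⟩; exact (abs_le.1 (hM x)).1⟩
  set s := ⨆ x, w x with hs
  set i := ⨅ x, w x with hi
  have hws : ∀ x, w x ≤ s := fun x => le_ciSup hba x
  have hwi : ∀ x, i ≤ w x := fun x => ciInf_le hbb x
  by_contra hne
  have hlt : i < s := by
    by_contra hle
    push Not at hle
    apply hne
    intro x y
    linarith [hws x, hwi x, hws y, hwi y]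
  have hd : 0 < s - i := by linarith
  have hv1 := h.affine (1 / (s - i)) (- i / (s - i))
  have hv2 := h.affine (- 1 / (s - i)) (s / (s - i))
  have e1 : ∀ y, 1 / (s - i) * w y + - i / (s - i) = (w y - i) / (s - i) := by intro y; ring
  have e2 : ∀ y, - 1 / (s - i) * w y + s / (s - i) = (s - w y) / (s - i) := by intro y; ring
  by_cases hcase : ∀ N : ℝ, ∃ R : ℝ, N ≤ R ∧ 0 < R ∧ volume (Metric.ball (0 : Eu n) 2) ≤
        2 * volume (Metric.ball (0 : Eu n) 2 ∩ {x | 1 / 2 ≤ (w (R • x) - i) / (s - i)})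
  · have := one _ _ hv1 (fun x => by rw [e1]; exact div_nonneg (by linarith [hwi x]) hd.le)
      (fun x => by rw [e1, div_le_one hd]; linarith [hws x]) (by simpa only [e1] using hcase)
    have h3 : i + c * (s - i) ≤ i := le_ciInf fun x => by
      have h4 := this x
      rw [e1, le_div_iff₀ hd] at h4
      linarith
    nlinarith
  · push Not at hcase
    obtain ⟨N, hN⟩ := hcase
    have := one _ _ hv2 (fun x => by rw [e2]; exact div_nonneg (by linarith [hws x]) hd.le)
      (fun x => by rw [e2, div_le_one hd]; linarith [hwi x]) (by
        intro N'
        refine ⟨max (max N N') 1, le_trans (le_max_right _ _) (le_max_left _ _), by positivity, ?_⟩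
        set R := max (max N N') 1
        have hR := hN R (le_trans (le_max_left _ _) (le_max_left _ _)) (by positivity)
        simp only [e2]
        by_contra! hcon
        set B := Metric.ball (0 : Eu n) 2
        set X := B ∩ {x | 1 / 2 ≤ (w (R • x) - i) / (s - i)}
        set Y := B ∩ {x | 1 / 2 ≤ (s - w (R • x)) / (s - i)}
        have hcov : B ⊆ X ∪ Y := by
          intro x hx
          by_cases hh : 1 / 2 ≤ (w (R • x) - i) / (s - i)
          · exact Or.inl ⟨hx, hh⟩
          · refine Or.inr ⟨hx, ?_⟩
            push Not at hh
            change 1 / 2 ≤ (s - w (R • x)) / (s - i)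
            rw [div_lt_iff₀ hd] at hh
            rw [le_div_iff₀ hd]
            linarith
        have h5 : volume B ≤ volume X + volume Y := (measure_mono hcov).trans (measure_union_le _ _)
        have h6 : 2 * volume B < 2 * volume B := by
          calc 2 * volume B ≤ 2 * (volume X + volume Y) := by gcongr
            _ = 2 * volume X + 2 * volume Y := by ring
            _ < volume B + volume B := ENNReal.add_lt_add hR hcon
            _ = 2 * volume B := by ring
        exact lt_irrefl _ h6)
    have h3 : s ≤ s - c * (s - i) := ciSup_le fun x => by
      have h4 := this x
      rw [e2, le_div_iff₀ hd] at h4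
      linarith
    nlinarith


theorem mse_pair {n : ℕ} (p q : Eu n) :
    ∃ P Q t : ℝ, P = Real.sqrt (1 + ‖p‖ ^ 2) ∧ Q = Real.sqrt (1 + ‖q‖ ^ 2) ∧ 1 ≤ P ∧ 1 ≤ Q ∧
      ‖p - q‖ ^ 2 = P ^ 2 + Q ^ 2 - 2 - 2 * t ∧ t = ⟪p, q⟫ ∧ 1 + t ≤ P * Q ∧
      ‖p - q‖ ^ 2 ≤ (P * Q) ^ 2 - (1 + t) ^ 2 ∧ ‖p‖ ^ 2 = P ^ 2 - 1 ∧ ‖q‖ ^ 2 = Q ^ 2 - 1 := by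
  refine ⟨_, _, ⟪p, q⟫, rfl, rfl, ?_, ?_, ?_, rfl, ?_, ?_, ?_, ?_⟩
  · exact Real.one_le_sqrt.2 (by nlinarith [norm_nonneg p])
  · exact Real.one_le_sqrt.2 (by nlinarith [norm_nonneg q])
  · rw [Real.sq_sqrt (by positivity), Real.sq_sqrt (by positivity), norm_sub_sq_real]; ring
  · rw [← Real.sqrt_mul (by positivity)]
    apply Real.le_sqrt_of_sq_le
    have h1 := abs_real_inner_le_norm p q
    have h2 := sq_le_sq' (by linarith [neg_abs_le ⟪p, q⟫]) ((le_abs_self _).trans h1)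
    have h3 := (le_abs_self _).trans h1
    nlinarith [sq_nonneg (‖p‖ - ‖q‖)]
  · rw [mul_pow, Real.sq_sqrt (by positivity), Real.sq_sqrt (by positivity), norm_sub_sq_real]
    have h1 := abs_real_inner_le_norm p q
    have h2 := sq_le_sq' (by linarith [neg_abs_le ⟪p, q⟫]) ((le_abs_self _).trans h1)
    nlinarith
  · rw [Real.sq_sqrt (by positivity)]; ring
  · rw [Real.sq_sqrt (by positivity)]; ring

/-- The vector field `p ↦ p / √(1+|p|²)`. -/
noncomputable def mfield {n : ℕ} (p : Eu n) : Eu n := (Real.sqrt (1 + ‖p‖ ^ 2))⁻¹ • p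

theorem mfield_mono {n : ℕ} {M : ℝ} {p q : Eu n} (hp : ‖p‖ ≤ M) (hq : ‖q‖ ≤ M) :
    (Real.sqrt (1 + M ^ 2) ^ 3)⁻¹ * ‖p - q‖ ^ 2 ≤ ⟪p - q, mfield p - mfield q⟫ := by
  obtain ⟨P, Q, t, hP, hQ, hP1, hQ1, h1, ht, h2, h3, h4, h5⟩ := mse_pair p q
  set W := Real.sqrt (1 + M ^ 2)
  have hPW : P ≤ W := by rw [hP]; apply Real.sqrt_le_sqrt; gcongr
  have hQW : Q ≤ W := by rw [hQ]; apply Real.sqrt_le_sqrt; gcongr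
  have hP0 : 0 < P := by linarith
  have hQ0 : 0 < Q := by linarith
  have hW0 : 0 < W := by linarith
  have e : ⟪p - q, mfield p - mfield q⟫ = (1 / P + 1 / Q) * (P * Q - 1 - t) := by
    unfold mfield
    rw [← hP, ← hQ]
    simp only [inner_sub_left, inner_sub_right, inner_smul_right, real_inner_self_eq_norm_sq]
    rw [real_inner_comm p q, ← ht, h4, h5]
    field_simp
    ring
  rw [e]
  set D := ‖p - q‖ ^ 2
  have hD : 0 ≤ D := by positivity
  have i1 : D ≤ (2 * (P * Q)) * (P * Q - 1 - t) := by nlinarith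
  have hPQ : P * Q ≤ W * W := mul_le_mul hPW hQW hQ0.le hW0.le
  have i2 : D / (2 * (W * W)) ≤ P * Q - 1 - t := by
    rw [div_le_iff₀ (by positivity)]
    nlinarith
  have i3 : 2 / W ≤ 1 / P + 1 / Q := by
    have j1 : 1 / W ≤ 1 / P := one_div_le_one_div_of_le hP0 hPW
    have j2 : 1 / W ≤ 1 / Q := one_div_le_one_div_of_le hQ0 hQW
    have : 2 / W = 1 / W + 1 / W := by ring
    linarith
  calc (W ^ 3)⁻¹ * D = (2 / W) * (D / (2 * (W * W))) := by field_simp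
    _ ≤ _ := mul_le_mul i3 i2 (by positivity) (by positivity)

theorem mfield_lip {n : ℕ} (p q : Eu n) : ‖mfield p - mfield q‖ ≤ 1 * ‖p - q‖ := by
  obtain ⟨P, Q, t, hP, hQ, hP1, hQ1, h1, ht, h2, h3, h4, h5⟩ := mse_pair p q
  have hP0 : 0 < P := by linarith
  have hQ0 : 0 < Q := by linarith
  rw [one_mul]
  apply le_of_sq_le_sq _ (norm_nonneg _)
  have e : ‖mfield p - mfield q‖ ^ 2 = 2 - (1 / P) ^ 2 - (1 / Q) ^ 2 - 2 * t * (1 / P) * (1 / Q) := by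
    unfold mfield
    rw [← hP, ← hQ, norm_sub_sq_real, norm_smul, norm_smul, mul_pow, mul_pow, h4, h5,
      inner_smul_left, inner_smul_right, ← ht]
    simp
    field_simp
    ring
  rw [e]
  have i0 : 2 - (1 / P) ^ 2 - (1 / Q) ^ 2 - 2 * t * (1 / P) * (1 / Q) ≤
      2 * (P * Q - 1 - t) * ((1 / P) * (1 / Q)) := by
    have : 2 * (P * Q - 1 - t) * ((1 / P) * (1 / Q)) =
      2 - 2 * (1 / P) * (1 / Q) - 2 * t * (1 / P) * (1 / Q) := by field_simp
    rw [this]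
    nlinarith [sq_nonneg (1 / P - 1 / Q)]
  refine i0.trans ?_
  have i1 : (1 / P) * (1 / Q) ≤ 1 := by
    apply mul_le_one₀ _ (by positivity) _
    · rw [div_le_one hP0]; exact hP1
    · rw [div_le_one hQ0]; exact hQ1
  calc _ ≤ 2 * (P * Q - 1 - t) * 1 := mul_le_mul_of_nonneg_left i1 (by linarith)
    _ ≤ _ := by rw [h1]; nlinarith [sq_nonneg (P - Q)]

theorem grad_coord {n : ℕ} (u : Eu n → ℝ) (x : Eu n) (j : Fin n) :
    (gradient u x) j = pd u x j := by
  unfold pd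
  rw [← inner_gradient_left, real_inner_comm, EuclideanSpace.inner_single_left]
  simp

theorem Eu_clm_sum {n : ℕ} (L : Eu n →L[ℝ] ℝ) (v : Eu n) :
    L v = ∑ j, v j * L (EuclideanSpace.single j 1) := by
  have h : v = ∑ j, v j • (EuclideanSpace.single j 1 : Eu n) := by
    ext i
    simp [Finset.sum_apply, Pi.single_apply]
  conv_lhs => rw [h]
  simp [map_sum]

theorem mse_weak {n : ℕ} (u : Eu n → ℝ) (hu : ContDiff ℝ 2 u)
    (hmse : ∀ x : Eu n, (1 + ∑ j, pd u x j ^ 2) * (∑ j, pd2 u x j j)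
        - ∑ j, ∑ k, pd u x j * pd u x k * pd2 u x j k = 0)
    (φ : Eu n → ℝ) (hφ : ContDiff ℝ 1 φ) (hφc : HasCompactSupport φ) :
    ∫ x, fderiv ℝ φ x (mfield (gradient u x)) = 0 := by
  have hg : ∀ j, ContDiff ℝ 1 (fun x => pd u x j) := by
    intro j
    unfold pd
    exact (hu.fderiv_right (m := 1) (by norm_num)).clm_apply contDiff_const
  set W : Eu n → ℝ := fun x => Real.sqrt (1 + ∑ k, pd u x k ^ 2) with hW
  have hpos : ∀ x, 0 < 1 + ∑ k, pd u x k ^ 2 := fun x => by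
    have : 0 ≤ ∑ k, pd u x k ^ 2 := Finset.sum_nonneg fun k _ => sq_nonneg _
    linarith
  have hWpos : ∀ x, 0 < W x := fun x => Real.sqrt_pos.2 (hpos x)
  have hW2 : ∀ x, W x ^ 2 = 1 + ∑ k, pd u x k ^ 2 := fun x => Real.sq_sqrt (hpos x).le
  have hS1 : ContDiff ℝ 1 (fun x => 1 + ∑ k, pd u x k ^ 2) :=
    contDiff_const.add (ContDiff.sum fun k _ => (hg k).pow 2)
  have hW1 : ContDiff ℝ 1 W := hS1.sqrt (fun x => (hpos x).ne')
  have ha1 : ∀ j, ContDiff ℝ 1 (fun x => pd u x j * (W x)⁻¹) := fun j =>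
    (hg j).mul (hW1.inv fun x => (hWpos x).ne')
  have hcoord : ∀ x j, (mfield (gradient u x)) j = pd u x j * (W x)⁻¹ := by
    intro x j
    have hn : ‖gradient u x‖ ^ 2 = ∑ k, pd u x k ^ 2 := by
      rw [EuclideanSpace.norm_sq_eq]
      apply Finset.sum_congr rfl
      intro k _
      rw [grad_coord, Real.norm_eq_abs, sq_abs]
    unfold mfield
    rw [hn, PiLp.smul_apply, grad_coord, smul_eq_mul, mul_comm]
  have hexp : ∀ x, fderiv ℝ φ x (mfield (gradient u x)) =
      ∑ j, (pd u x j * (W x)⁻¹) * fderiv ℝ φ x (EuclideanSpace.single j 1) := by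
    intro x
    rw [Eu_clm_sum]
    simp_rw [hcoord]
  -- derivative of the field
  have hgd : ∀ k x, HasFDerivAt (fun x => pd u x k) (fderiv ℝ (fun x => pd u x k) x) x :=
    fun k x => ((hg k).differentiable one_ne_zero x).hasFDerivAt
  have hSd : ∀ x, HasFDerivAt (fun x => 1 + ∑ k, pd u x k ^ 2)
      (∑ k, (2 * pd u x k) • fderiv ℝ (fun x => pd u x k) x) x := by
    intro x
    have h1 : ∀ k ∈ (Finset.univ : Finset (Fin n)), HasFDerivAt (fun x => pd u x k ^ 2)
        ((2 * pd u x k) • fderiv ℝ (fun x => pd u x k) x) x := by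
      intro k _
      have := (hgd k x).pow 2
      simpa using this
    have h2 := HasFDerivAt.fun_sum h1
    exact h2.const_add 1
  have had : ∀ j x, fderiv ℝ (fun x => pd u x j * (W x)⁻¹) x (EuclideanSpace.single j 1) =
      pd2 u x j j * (W x)⁻¹ - (W x)⁻¹ ^ 3 * ∑ k, pd u x j * pd u x k * pd2 u x k j := by
    intro j x
    have h1 : HasFDerivAt W _ x := (hSd x).sqrt (hpos x).ne'
    have h2 := (hasDerivAt_inv (hWpos x).ne').comp_hasFDerivAt x h1
    have h3 := ((hgd j x).mul h2).fderiv
    have h3' : fderiv ℝ (fun x => pd u x j * (W x)⁻¹) x = _ := h3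
    rw [h3']
    have hs : Real.sqrt (1 + ∑ k, pd u x k ^ 2) = W x := rfl
    have hp2 : ∀ k, fderiv ℝ (fun x => pd u x k) x (EuclideanSpace.single j 1) = pd2 u x k j :=
      fun k => rfl
    simp only [hs, add_apply, smul_apply, smul_eq_mul, ContinuousLinearMap.sum_apply, hp2,
      Function.comp]
    have h4 : ∑ k, 2 * pd u x k * pd2 u x k j = 2 * ∑ k, pd u x k * pd2 u x k j := by
      rw [Finset.mul_sum]; exact Finset.sum_congr rfl fun k _ => by ring
    have h5 : ∑ k, pd u x j * pd u x k * pd2 u x k j = pd u x j * ∑ k, pd u x k * pd2 u x k j := by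
      rw [Finset.mul_sum]; exact Finset.sum_congr rfl fun k _ => by ring
    rw [h4, h5]
    have := (hWpos x).ne'
    field_simp
    ring
  have hdiv : ∀ x, ∑ j, fderiv ℝ (fun x => pd u x j * (W x)⁻¹) x (EuclideanSpace.single j 1) = 0 := by
    intro x
    simp_rw [had]
    rw [Finset.sum_sub_distrib, ← Finset.sum_mul, ← Finset.mul_sum]
    have h1 := hmse x
    rw [← hW2 x] at h1
    have h2 : ∑ j, ∑ k, pd u x j * pd u x k * pd2 u x k j =
        ∑ j, ∑ k, pd u x j * pd u x k * pd2 u x j k := by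
      rw [Finset.sum_comm]
      exact Finset.sum_congr rfl fun k _ => Finset.sum_congr rfl fun j _ => by ring
    rw [h2]
    have h3 : ∑ j, ∑ k, pd u x j * pd u x k * pd2 u x j k = W x ^ 2 * ∑ j, pd2 u x j j := by
      linarith
    rw [h3]
    have := (hWpos x).ne'
    field_simp
    ring
  have hφd : ∀ j : Fin n, Continuous (fun x => fderiv ℝ φ x (EuclideanSpace.single j 1)) := fun j =>
    (hφ.continuous_fderiv one_ne_zero).clm_apply continuous_const
  have hφdc : ∀ j : Fin n, HasCompactSupport (fun x => fderiv ℝ φ x (EuclideanSpace.single j 1)) :=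
    fun j => hφc.fderiv_apply ℝ _
  have had1 : ∀ j : Fin n, Continuous (fun x => fderiv ℝ (fun x => pd u x j * (W x)⁻¹) x
      (EuclideanSpace.single j 1)) := fun j =>
    ((ha1 j).continuous_fderiv one_ne_zero).clm_apply continuous_const
  have hint1 : ∀ j : Fin n, Integrable (fun x => (pd u x j * (W x)⁻¹) *
      fderiv ℝ φ x (EuclideanSpace.single j 1)) := fun j =>
    Continuous.integrable_of_hasCompactSupport ((ha1 j).continuous.mul (hφd j)) (hφdc j).mul_left
  have hint2 : ∀ j : Fin n, Integrable (fun x => fderiv ℝ (fun x => pd u x j * (W x)⁻¹) x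
      (EuclideanSpace.single j 1) * φ x) := fun j =>
    Continuous.integrable_of_hasCompactSupport ((had1 j).mul hφ.continuous) hφc.mul_left
  have hint3 : ∀ j : Fin n, Integrable (fun x => (pd u x j * (W x)⁻¹) * φ x) := fun j =>
    Continuous.integrable_of_hasCompactSupport ((ha1 j).continuous.mul hφ.continuous) hφc.mul_left
  simp_rw [hexp]
  rw [integral_finsetSum _ fun j _ => hint1 j]
  have hibp : ∀ j : Fin n, ∫ x, (pd u x j * (W x)⁻¹) * fderiv ℝ φ x (EuclideanSpace.single j 1) =
      - ∫ x, fderiv ℝ (fun x => pd u x j * (W x)⁻¹) x (EuclideanSpace.single j 1) * φ x := fun j =>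
    integral_mul_fderiv_eq_neg_fderiv_mul_of_integrable (hint2 j) (hint1 j) (hint3 j)
      (fun x _ => (ha1 j).differentiable one_ne_zero x) (fun x _ => hφ.differentiable one_ne_zero x)
  simp_rw [hibp]
  rw [Finset.sum_neg_distrib, ← integral_finsetSum _ fun j _ => hint2 j]
  simp_rw [← Finset.sum_mul, hdiv]
  simp

theorem mse_wsol {n : ℕ} (u : Eu n → ℝ) (hu : ContDiff ℝ 2 u)
    (hmse : ∀ x : Eu n, (1 + ∑ j, pd u x j ^ 2) * (∑ j, pd2 u x j j)
        - ∑ j, ∑ k, pd u x j * pd u x k * pd2 u x j k = 0)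
    {M : ℝ} (hM : ∀ x, ‖gradient u x‖ ≤ M) (h : Eu n) :
    WSol (Real.sqrt (1 + M ^ 2) ^ 3)⁻¹ 1 (fun x => u (x + h) - u x)
      (fun x => mfield (gradient u (x + h)) - mfield (gradient u x)) := by
  have hu1 : ContDiff ℝ 1 u := hu.of_le (by norm_num)
  have hgc : Continuous (fun x => gradient u x) := by
    have h1 := hu1.continuous_fderiv one_ne_zero
    exact ((InnerProductSpace.toDual ℝ (Eu n)).symm.continuous).comp h1
  have hmc : Continuous (mfield : Eu n → Eu n) := by
    have hh : Continuous (fun p : Eu n => (Real.sqrt (1 + ‖p‖ ^ 2))⁻¹) :=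
      Continuous.inv₀ (by fun_prop) (fun p => (Real.sqrt_pos.2 (by positivity)).ne')
    exact hh.smul continuous_id
  have hd : ∀ x, fderiv ℝ (fun x => u (x + h) - u x) x = fderiv ℝ u (x + h) - fderiv ℝ u x := by
    intro x
    have h1 : DifferentiableAt ℝ (fun x => u (x + h)) x :=
      (hu1.differentiable one_ne_zero).comp (by fun_prop) x
    have := fderiv_sub h1 (hu1.differentiable one_ne_zero x)
    rw [fderiv_comp_add_right] at this
    exact this
  have hdg : ∀ x, fderiv ℝ (fun x => u (x + h) - u x) x =
      InnerProductSpace.toDual ℝ (Eu n) (gradient u (x + h) - gradient u x) := by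
    intro x
    rw [hd, map_sub, toDual_gradient, toDual_gradient]
  have hc1 : Continuous (fun x => mfield (gradient u x)) := hmc.comp hgc
  have hc2 : Continuous (fun x => mfield (gradient u (x + h))) := hc1.comp (by fun_prop)
  refine ⟨by fun_prop, hc2.sub hc1, ?_, ?_, ?_⟩
  · intro x
    rw [hdg, LinearIsometryEquiv.norm_map, InnerProductSpace.toDual_apply_apply]
    exact mfield_mono (hM _) (hM _)
  · intro x
    rw [hdg, LinearIsometryEquiv.norm_map]
    exact mfield_lip _ _
  · intro φ hφ hφc
    have hφd := hφ.continuous_fderiv one_ne_zero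
    have i : ∀ v : Eu n → Eu n, Continuous v → Integrable (fun x => fderiv ℝ φ x (v x)) := by
      intro v hv
      apply Continuous.integrable_of_hasCompactSupport (hφd.clm_apply hv)
      exact (hφc.fderiv ℝ).mono' (fun x hx => subset_tsupport _ (by
          intro h0; apply hx; simp [h0]))
    simp only [map_sub]
    rw [integral_sub (i _ hc2) (i _ hc1), mse_weak u hu hmse φ hφ hφc, sub_zero]
    have h1 := mse_weak u hu hmse (fun x => φ (x + (-h))) (by fun_prop)
      (hφc.comp_homeomorph (Homeomorph.addRight (-h)))
    simp_rw [fderiv_comp_add_right] at h1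
    rw [← integral_add_right_eq_self _ h] at h1
    simpa using h1

/-- **Moser's Bernstein-type theorem**: an entire `C²` solution of the minimal surface
equation `div(Du/√(1+|Du|²)) = 0` (equivalently
`(1+|Du|²)·Δu − Σ_{j,k} u_{x_j} u_{x_k} u_{x_j x_k} = 0`) over `ℝⁿ` with bounded gradient
is affine linear. -/
theorem bernstein_minimal_surface_bounded_gradient (n : ℕ)
    (u : EuclideanSpace ℝ (Fin n) → ℝ) (hu : ContDiff ℝ 2 u)
    (hmse : ∀ x : EuclideanSpace ℝ (Fin n),
      (1 + ∑ j, pd u x j ^ 2) * (∑ j, pd2 u x j j)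
        - ∑ j, ∑ k, pd u x j * pd u x k * pd2 u x j k = 0)
    (hbd : ∃ M : ℝ, ∀ x : EuclideanSpace ℝ (Fin n), ‖gradient u x‖ ≤ M) :
    ∃ (a : EuclideanSpace ℝ (Fin n)) (c : ℝ),
      ∀ x : EuclideanSpace ℝ (Fin n), u x = ⟪a, x⟫ + c := by
  have hu1 : ContDiff ℝ 1 u := hu.of_le (by norm_num)
  have hdiff := hu1.differentiable one_ne_zero
  have hconst : ∀ x, fderiv ℝ u x = fderiv ℝ u 0 := by
    rcases Nat.lt_or_ge n 2 with hn | hn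
    · interval_cases n
      · intro x; rw [Subsingleton.elim x 0]
      · intro x
        have h0 : ∀ x, fderiv ℝ (fun y => fderiv ℝ u y (EuclideanSpace.single 0 1)) x = 0 := by
          intro x
          ext v
          rw [Eu_clm_sum]
          have h1 := hmse x
          simp only [Fin.sum_univ_one, Fin.isValue] at h1 ⊢
          have h2 : pd2 u x 0 0 = 0 := by linear_combination h1
          unfold pd2 at h2
          rw [h2]; simp
        have h1 := is_const_of_fderiv_eq_zero (𝕜 := ℝ)
          (((hu.fderiv_right (m := 1) (by norm_num)).clm_apply contDiff_const).differentiable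
            one_ne_zero) h0 x 0
        ext v
        rw [Eu_clm_sum, Eu_clm_sum (fderiv ℝ u 0)]
        simp only [Fin.sum_univ_one, Fin.isValue]
        rw [h1]
    · obtain ⟨M, hM⟩ := hbd
      intro y
      have hw := mse_wsol u hu hmse hM y
      have hL := hw.liouville hn (by
          have : 0 < Real.sqrt (1 + M ^ 2) := Real.sqrt_pos.2 (by positivity)
          positivity) zero_le_one (M := M * ‖y‖) (by
        intro x
        have h1 := Convex.norm_image_sub_le_of_norm_fderiv_le (𝕜 := ℝ) (f := u) (C := M)
          (s := Set.univ) (x := x) (y := x + y) (fun x _ => hdiff x) (fun x _ => by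
            rw [← toDual_gradient, LinearIsometryEquiv.norm_map]; exact hM x) convex_univ
            (Set.mem_univ _) (Set.mem_univ _)
        rw [add_sub_cancel_left] at h1
        exact h1)
      have h2 : (fun x => u (x + y)) = fun x => u x + (u (0 + y) - u 0) := by
        ext x
        have := hL x 0
        linarith
      have h3 := fderiv_comp_add_right (𝕜 := ℝ) (f := u) (x := 0) y
      rw [h2, fderiv_add_const, zero_add] at h3
      exact h3.symm
  refine ⟨gradient u 0, u 0, ?_⟩
  intro x
  have h1 := is_const_of_fderiv_eq_zero (𝕜 := ℝ) (f := fun x => u x - fderiv ℝ u 0 x)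
    (hdiff.sub (fderiv ℝ u 0).differentiable) (by
      intro y
      have := ((hdiff y).hasFDerivAt.sub (fderiv ℝ u 0).hasFDerivAt).fderiv
      have h' : fderiv ℝ (fun x => u x - fderiv ℝ u 0 x) y = _ := this
      rw [h', hconst y, sub_self]) x 0
  simp only [map_zero, sub_zero] at h1
  rw [inner_gradient_left]
  linarith
end

section
/- Let k ≥ 1 and let f : ℝ² → ℝᵏ be a C² map satisfying the minimal surface system (1 + |f_y|²)·f_xx − 2·(f_x • f_y)·f_xy + (1 + |f_x|²)·f_yy = 0 at every point of ℝ², and suppose the total derivative Df is bounded on ℝ². Then f is affine linear, i.e. there exist a linear map A : ℝ² → ℝᵏ and b ∈ ℝᵏ with f(x) = A x + b for all x ∈ ℝ². -/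
open scoped RealInnerProductSpace

/-- Vector-valued partial derivative `f_x`. -/
noncomputable def fx {k : ℕ} (f : ℝ × ℝ → EuclideanSpace ℝ (Fin k)) (p : ℝ × ℝ) :
    EuclideanSpace ℝ (Fin k) := fderiv ℝ f p (1, 0)

/-- Vector-valued partial derivative `f_y`. -/
noncomputable def fy {k : ℕ} (f : ℝ × ℝ → EuclideanSpace ℝ (Fin k)) (p : ℝ × ℝ) :
    EuclideanSpace ℝ (Fin k) := fderiv ℝ f p (0, 1)

/-- Vector-valued second partial derivative `f_xx`. -/
noncomputable def fxx {k : ℕ} (f : ℝ × ℝ → EuclideanSpace ℝ (Fin k)) (p : ℝ × ℝ) :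
    EuclideanSpace ℝ (Fin k) := fderiv ℝ (fx f) p (1, 0)

/-- Vector-valued second partial derivative `f_xy`. -/
noncomputable def fxy {k : ℕ} (f : ℝ × ℝ → EuclideanSpace ℝ (Fin k)) (p : ℝ × ℝ) :
    EuclideanSpace ℝ (Fin k) := fderiv ℝ (fx f) p (0, 1)

/-- Vector-valued second partial derivative `f_yy`. -/
noncomputable def fyy {k : ℕ} (f : ℝ × ℝ → EuclideanSpace ℝ (Fin k)) (p : ℝ × ℝ) :
    EuclideanSpace ℝ (Fin k) := fderiv ℝ (fy f) p (0, 1)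

/-- Poincaré lemma for a closed form `P dx + Q dy` on the plane. -/
lemma poincare_plane_s5 (P Q : ℝ × ℝ → ℝ) (P' Q' : ℝ × ℝ → (ℝ × ℝ →L[ℝ] ℝ))
    (hP : ∀ z, HasFDerivAt P (P' z) z) (hQ : ∀ z, HasFDerivAt Q (Q' z) z)
    (h : ∀ z, P' z (0, 1) = Q' z (1, 0)) :
    ∃ u : ℝ × ℝ → ℝ, ∀ z, HasFDerivAt u
      (P z • ContinuousLinearMap.fst ℝ ℝ ℝ + Q z • ContinuousLinearMap.snd ℝ ℝ ℝ) z := by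
  have hω : ∀ z, HasFDerivAt (fun z => P z • ContinuousLinearMap.fst ℝ ℝ ℝ
      + Q z • ContinuousLinearMap.snd ℝ ℝ ℝ)
      ((P' z).smulRight (ContinuousLinearMap.fst ℝ ℝ ℝ)
        + (Q' z).smulRight (ContinuousLinearMap.snd ℝ ℝ ℝ)) z := by
    intro z
    exact ((hP z).smul_const (ContinuousLinearMap.fst ℝ ℝ ℝ)).fun_add
      ((hQ z).smul_const (ContinuousLinearMap.snd ℝ ℝ ℝ))
  obtain ⟨u, hu⟩ := convex_univ.exists_forall_hasFDerivAt_of_fderiv_symmetric isOpen_univ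
    (fun z _ => (hω z).differentiableAt.differentiableWithinAt)
    (fun z _ x y => by
      rw [(hω z).fderiv]
      have e : ∀ (T : ℝ × ℝ →L[ℝ] ℝ) (x : ℝ × ℝ), T x = x.1 * T (1, 0) + x.2 * T (0, 1) := by
        intro T x
        have : x = x.1 • (1, 0) + x.2 • (0, 1) := by ext <;> simp
        conv_lhs => rw [this, map_add, map_smul, map_smul]
        simp
      simp only [add_apply, ContinuousLinearMap.smulRight_apply,
        smul_apply, ContinuousLinearMap.coe_fst', ContinuousLinearMap.coe_snd',
        smul_eq_mul]
      rw [e (P' z) x, e (P' z) y, e (Q' z) x, e (Q' z) y, h z]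
      ring)
  exact ⟨u, fun z => hu z trivial⟩

open Complex in
/-- The Lewy map. -/
noncomputable def lewy (F G : ℝ × ℝ → ℝ) (z : ℝ × ℝ) : ℂ :=
  ((z.1 + F z : ℝ) : ℂ) + ((z.2 + G z : ℝ) : ℂ) * I

lemma lewy_expand (a b c F G : ℝ × ℝ → ℝ)
    (hdet : ∀ z, a z * c z - b z ^ 2 = 1) (ha : ∀ z, 0 < a z)
    (hF : ∀ z, HasFDerivAt F
      (a z • ContinuousLinearMap.fst ℝ ℝ ℝ + b z • ContinuousLinearMap.snd ℝ ℝ ℝ) z)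
    (hG : ∀ z, HasFDerivAt G
      (b z • ContinuousLinearMap.fst ℝ ℝ ℝ + c z • ContinuousLinearMap.snd ℝ ℝ ℝ) z)
    (z w : ℝ × ℝ) : ‖z - w‖ ≤ ‖lewy F G z - lewy F G w‖ := by
  set d := z - w with hd
  let φ : ℝ → ℝ := fun t => d.1 * F (w + t • d) + d.2 * G (w + t • d)
  have hline : ∀ t : ℝ, HasDerivAt (fun t : ℝ => w + t • d) d t := by
    intro t
    simpa using ((hasDerivAt_id t).smul_const d).const_add w
  have hφ : ∀ t, HasDerivAt φ (d.1 * (a (w + t • d) * d.1 + b (w + t • d) * d.2)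
      + d.2 * (b (w + t • d) * d.1 + c (w + t • d) * d.2)) t := by
    intro t
    have h1 := ((hF (w + t • d)).comp_hasDerivAt t (hline t)).const_mul d.1
    have h2 := ((hG (w + t • d)).comp_hasDerivAt t (hline t)).const_mul d.2
    simpa using h1.fun_add h2
  have hmono : Monotone φ := by
    apply monotone_of_hasDerivAt_nonneg hφ
    intro t
    have h1 := hdet (w + t • d)
    have h2 := ha (w + t • d)
    simp only [Pi.zero_apply]
    generalize a (w + t • d) = A at h1 h2 ⊢
    generalize b (w + t • d) = B at h1 ⊢
    generalize c (w + t • d) = C at h1 ⊢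
    have : 0 ≤ A * (d.1 * (A * d.1 + B * d.2) + d.2 * (B * d.1 + C * d.2)) := by
      nlinarith [sq_nonneg (A * d.1 + B * d.2), sq_nonneg d.2]
    exact nonneg_of_mul_nonneg_right this h2
  have h01 := hmono (zero_le_one)
  have hz : w + d = z := by simp [hd]
  simp only [φ, zero_smul, one_smul, add_zero, hz] at h01
  have e1 : (lewy F G z - lewy F G w).re = d.1 + (F z - F w) := by
    simp [lewy, hd]; ring
  have e2 : (lewy F G z - lewy F G w).im = d.2 + (G z - G w) := by
    simp [lewy, hd]; ring
  have hsq : d.1 ^ 2 + d.2 ^ 2 ≤ ‖lewy F G z - lewy F G w‖ ^ 2 := by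
    rw [Complex.sq_norm, Complex.normSq_apply, e1, e2]
    nlinarith [sq_nonneg (F z - F w), sq_nonneg (G z - G w)]
  rw [Prod.norm_def]
  apply max_le
  · rw [Real.norm_eq_abs]
    refine abs_le_of_sq_le_sq ?_ (norm_nonneg _)
    nlinarith [sq_nonneg d.2]
  · rw [Real.norm_eq_abs]
    refine abs_le_of_sq_le_sq ?_ (norm_nonneg _)
    nlinarith [sq_nonneg d.1]

/-- Derivative of the Lewy map. -/
noncomputable def cplx (A B C D : ℝ) : ℝ × ℝ →L[ℝ] ℂ :=
  (A • ContinuousLinearMap.fst ℝ ℝ ℝ + B • ContinuousLinearMap.snd ℝ ℝ ℝ).smulRight (1 : ℂ)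
  + (C • ContinuousLinearMap.fst ℝ ℝ ℝ + D • ContinuousLinearMap.snd ℝ ℝ ℝ).smulRight Complex.I

lemma cplx_re (A B C D : ℝ) (x : ℝ × ℝ) : (cplx A B C D x).re = A * x.1 + B * x.2 := by
  simp [cplx]

lemma cplx_im (A B C D : ℝ) (x : ℝ × ℝ) : (cplx A B C D x).im = C * x.1 + D * x.2 := by
  simp [cplx]

lemma hasFDerivAt_cplx {u v : ℝ × ℝ → ℝ} {A B C D : ℝ} {z : ℝ × ℝ}
    (hu : HasFDerivAt u
      (A • ContinuousLinearMap.fst ℝ ℝ ℝ + B • ContinuousLinearMap.snd ℝ ℝ ℝ) z)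
    (hv : HasFDerivAt v
      (C • ContinuousLinearMap.fst ℝ ℝ ℝ + D • ContinuousLinearMap.snd ℝ ℝ ℝ) z) :
    HasFDerivAt (fun z => (u z : ℂ) + (v z : ℂ) * Complex.I) (cplx A B C D) z := by
  have := (hu.smul_const (1 : ℂ)).add (hv.smul_const Complex.I)
  refine this.congr_of_eventuallyEq (Filter.Eventually.of_forall fun x => ?_)
  simp

lemma hasFDerivAt_lewy {a b c : ℝ} {F G : ℝ × ℝ → ℝ} {z : ℝ × ℝ}
    (hF : HasFDerivAt F
      (a • ContinuousLinearMap.fst ℝ ℝ ℝ + b • ContinuousLinearMap.snd ℝ ℝ ℝ) z)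
    (hG : HasFDerivAt G
      (b • ContinuousLinearMap.fst ℝ ℝ ℝ + c • ContinuousLinearMap.snd ℝ ℝ ℝ) z) :
    HasFDerivAt (lewy F G) (cplx (1 + a) b b (1 + c)) z := by
  apply hasFDerivAt_cplx (u := fun z => z.1 + F z) (v := fun z => z.2 + G z)
  · refine ((hasFDerivAt_fst (𝕜 := ℝ) (p := z)).fun_add hF).congr_fderiv ?_
    rw [add_smul, one_smul, add_assoc]
  · refine ((hasFDerivAt_snd (𝕜 := ℝ) (p := z)).fun_add hG).congr_fderiv ?_
    rw [add_smul, one_smul]; abel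

lemma lewy_surjective (a b c F G : ℝ × ℝ → ℝ)
    (hac : Continuous a) (hbc : Continuous b) (hcc : Continuous c)
    (hdet : ∀ z, a z * c z - b z ^ 2 = 1) (ha : ∀ z, 0 < a z)
    (hF : ∀ z, HasFDerivAt F
      (a z • ContinuousLinearMap.fst ℝ ℝ ℝ + b z • ContinuousLinearMap.snd ℝ ℝ ℝ) z)
    (hG : ∀ z, HasFDerivAt G
      (b z • ContinuousLinearMap.fst ℝ ℝ ℝ + c z • ContinuousLinearMap.snd ℝ ℝ ℝ) z) :
    Function.Surjective (lewy F G) := by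
  have hL : ∀ z, HasFDerivAt (lewy F G) (cplx (1 + a z) (b z) (b z) (1 + c z)) z :=
    fun z => hasFDerivAt_lewy (hF z) (hG z)
  have hLc : Continuous (fun z => cplx (1 + a z) (b z) (b z) (1 + c z)) := by
    have h1 : ∀ v : ℂ, Continuous (fun T : ℝ × ℝ →L[ℝ] ℝ => T.smulRight v) := fun v =>
      ((ContinuousLinearMap.smulRightL ℝ (ℝ × ℝ) ℂ).flip v).continuous
    unfold cplx
    refine ((h1 1).comp ?_).add ((h1 Complex.I).comp ?_) <;> fun_prop
  have hopen : IsOpenMap (lewy F G) := by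
    rw [isOpenMap_iff_nhds_le]
    intro z
    have hs : HasStrictFDerivAt (lewy F G) (cplx (1 + a z) (b z) (b z) (1 + c z)) z :=
      hasStrictFDerivAt_of_hasFDerivAt_of_continuousAt
        (Filter.Eventually.of_forall hL) hLc.continuousAt
    refine (hs.map_nhds_eq_of_surj ?_).ge
    rw [LinearMap.range_eq_top]
    intro y
    have h1 := hdet z
    have h2 := ha z
    have h3 : 0 < c z := by
      have : 0 < a z * c z := by nlinarith [sq_nonneg (b z)]
      exact (pos_iff_pos_of_mul_pos this).1 h2
    have hT : (2 + a z + c z) ≠ 0 := by positivity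
    refine ⟨(((1 + c z) * y.re - b z * y.im) / (2 + a z + c z),
      ((1 + a z) * y.im - b z * y.re) / (2 + a z + c z)), ?_⟩
    apply Complex.ext
    · change (cplx _ _ _ _ _).re = _
      rw [cplx_re]
      field_simp
      linear_combination y.re * h1
    · change (cplx _ _ _ _ _).im = _
      rw [cplx_im]
      field_simp
      linear_combination y.im * h1
  have hanti : AntilipschitzWith 1 (lewy F G) :=
    AntilipschitzWith.of_le_mul_dist fun z w => by
      simpa [dist_eq_norm] using lewy_expand a b c F G hdet ha hF hG z w
  have hcont : Continuous (lewy F G) :=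
    continuous_iff_continuousAt.2 fun z => (hL z).continuousAt
  have hclosed : IsClosed (Set.range (lewy F G)) := by
    have hp : IsProperMap (lewy F G) := by
      rw [isProperMap_iff_tendsto_cocompact]
      refine ⟨hcont, ?_⟩
      have := hanti.tendsto_cobounded
      rwa [Metric.cobounded_eq_cocompact, Metric.cobounded_eq_cocompact] at this
    exact hp.isClosedMap.isClosed_range
  have hcl : IsClopen (Set.range (lewy F G)) := ⟨hclosed, hopen.isOpen_range⟩
  exact Set.range_eq_univ.1 (hcl.eq_univ (Set.range_nonempty _))

/-- The complex derivative with respect to the Lewy coordinate. -/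
noncomputable def alph (a b c p q : ℝ) : ℂ :=
  ⟨(p * (1 + c) - q * b) / (2 + a + c), (p * b - q * (1 + a)) / (2 + a + c)⟩

lemma alph_const (a b c F G p q u v : ℝ × ℝ → ℝ)
    (hac : Continuous a) (hbc : Continuous b) (hcc : Continuous c)
    (hdet : ∀ z, a z * c z - b z ^ 2 = 1) (ha : ∀ z, 0 < a z)
    (hF : ∀ z, HasFDerivAt F
      (a z • ContinuousLinearMap.fst ℝ ℝ ℝ + b z • ContinuousLinearMap.snd ℝ ℝ ℝ) z)
    (hG : ∀ z, HasFDerivAt G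
      (b z • ContinuousLinearMap.fst ℝ ℝ ℝ + c z • ContinuousLinearMap.snd ℝ ℝ ℝ) z)
    (hu : ∀ z, HasFDerivAt u
      (p z • ContinuousLinearMap.fst ℝ ℝ ℝ + q z • ContinuousLinearMap.snd ℝ ℝ ℝ) z)
    (hv : ∀ z, HasFDerivAt v
      ((b z * p z - a z * q z) • ContinuousLinearMap.fst ℝ ℝ ℝ
        + (c z * p z - b z * q z) • ContinuousLinearMap.snd ℝ ℝ ℝ) z)
    (K : ℝ) (hp : ∀ z, |p z| ≤ K) (hq : ∀ z, |q z| ≤ K) (z w : ℝ × ℝ) :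
    alph (a z) (b z) (c z) (p z) (q z) = alph (a w) (b w) (c w) (p w) (q w) := by
  have hc : ∀ z, 0 < c z := fun z => by
    have : 0 < a z * c z := by nlinarith [sq_nonneg (b z), hdet z]
    exact (pos_iff_pos_of_mul_pos this).1 (ha z)
  have hsurj := lewy_surjective a b c F G hac hbc hcc hdet ha hF hG
  have hexp := lewy_expand a b c F G hdet ha hF hG
  let S : ℂ → ℝ × ℝ := Function.surjInv hsurj
  have hLS : ∀ ζ, lewy F G (S ζ) = ζ := Function.surjInv_eq hsurj
  have hSL : ∀ z, S (lewy F G z) = z := fun z => by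
    have := hexp (S (lewy F G z)) z
    rw [hLS, sub_self, norm_zero] at this
    exact sub_eq_zero.1 (norm_le_zero_iff.1 this)
  have hSlip : ∀ ζ ω, ‖S ζ - S ω‖ ≤ ‖ζ - ω‖ := fun ζ ω => by
    have := hexp (S ζ) (S ω)
    rwa [hLS, hLS] at this
  have hScont : Continuous S := by
    refine LipschitzWith.continuous (K := 1) (LipschitzWith.of_dist_le_mul fun ζ ω => ?_)
    simpa [dist_eq_norm] using hSlip ζ ω
  let h : ℝ × ℝ → ℂ := fun z => (u z : ℂ) + (v z : ℂ) * Complex.I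
  let α : ℝ × ℝ → ℂ := fun z => alph (a z) (b z) (c z) (p z) (q z)
  have hlin : ∀ z x, cplx (p z) (q z) (b z * p z - a z * q z) (c z * p z - b z * q z) x
      = α z * cplx (1 + a z) (b z) (b z) (1 + c z) x := by
    intro z x
    have h1 := hdet z
    have h2 := ha z
    have h3 := hc z
    have hT : (2 + a z + c z) ≠ 0 := by positivity
    apply Complex.ext
    · rw [Complex.mul_re, cplx_re, cplx_re, cplx_im]
      simp only [α, alph]
      field_simp
      linear_combination (-(p z * x.1) - q z * x.2) * h1
    · rw [Complex.mul_im, cplx_re, cplx_im, cplx_im]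
      simp only [α, alph]
      field_simp
      linear_combination ((-q z) * x.1 + (p z) * x.2) * h1
  have hH : ∀ ζ, HasDerivAt (fun ζ => h (S ζ)) (α (S ζ)) ζ := by
    intro ζ
    have d1 : HasFDerivAt h _ (S ζ) := hasFDerivAt_cplx (hu (S ζ)) (hv (S ζ))
    have d2 := hasFDerivAt_lewy (hF (S ζ)) (hG (S ζ))
    have d3 : HasFDerivAt (fun z => h z - α (S ζ) * lewy F G z) (0 : ℝ × ℝ →L[ℝ] ℂ) (S ζ) := by
      refine (d1.fun_sub (d2.const_mul (α (S ζ)))).congr_fderiv ?_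
      ext <;> simp [hlin]
    rw [hasDerivAt_iff_isLittleO]
    have d4 := (hasFDerivAt_iff_isLittleO.1 d3).comp_tendsto (hScont.tendsto ζ)
    have d5 : ((fun x' => x' - S ζ) ∘ S) =O[nhds ζ] fun x' => x' - ζ :=
      Asymptotics.IsBigO.of_bound 1 (Filter.Eventually.of_forall fun x => by
        simpa using hSlip x ζ)
    refine (d4.trans_isBigO d5).congr_left fun x => ?_
    simp only [Function.comp, hLS, zero_apply, smul_eq_mul]
    ring
  have hbound : ∀ z, ‖α z‖ ≤ 4 * K := by
    intro z
    have h1 := hdet z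
    have h2 := ha z
    have h3 := hc z
    have hT : 0 < (2 + a z + c z) := by positivity
    have hb : |b z| ≤ 2 + a z + c z := by
      refine abs_le_of_sq_le_sq ?_ hT.le
      nlinarith [mul_pos h2 h3, sq_nonneg (a z - c z)]
    have e1 : ∀ s t : ℝ, |s| ≤ 2 + a z + c z → |t| ≤ 2 + a z + c z →
        |(p z * s - q z * t) / (2 + a z + c z)| ≤ 2 * K := by
      intro s t hs ht
      rw [abs_div, abs_of_pos hT, div_le_iff₀ hT]
      have i1 : |p z * s| ≤ K * (2 + a z + c z) := by
        rw [abs_mul]; exact mul_le_mul (hp z) hs (abs_nonneg _) ((abs_nonneg _).trans (hp z))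
      have i2 : |q z * t| ≤ K * (2 + a z + c z) := by
        rw [abs_mul]; exact mul_le_mul (hq z) ht (abs_nonneg _) ((abs_nonneg _).trans (hq z))
      have := abs_sub (p z * s) (q z * t)
      linarith
    have j1 : |1 + c z| ≤ 2 + a z + c z := by rw [abs_of_pos (by positivity)]; linarith
    have j2 : |1 + a z| ≤ 2 + a z + c z := by rw [abs_of_pos (by positivity)]; linarith
    refine (Complex.norm_le_abs_re_add_abs_im _).trans ?_
    have k1 := e1 _ _ j1 hb
    have k2 := e1 _ _ hb j2
    simp only [α, alph]
    linarith
  have hHd : Differentiable ℂ (fun ζ => h (S ζ)) := fun ζ => (hH ζ).differentiableAt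
  have hder : deriv (fun ζ => h (S ζ)) = fun ζ => α (S ζ) := funext fun ζ => (hH ζ).deriv
  have hdd : Differentiable ℂ (fun ζ => α (S ζ)) := by
    rw [← hder]
    exact (hHd.contDiff (n := 2)).differentiable_deriv_two
  have hb : Bornology.IsBounded (Set.range fun ζ => α (S ζ)) := by
    rw [isBounded_iff_forall_norm_le]
    exact ⟨4 * K, by rintro _ ⟨ζ, rfl⟩; exact hbound _⟩
  have := hdd.apply_eq_apply_of_bounded hb (lewy F G z) (lewy F G w)
  simpa only [hSL] using this

/-- Algebraic derivative computation for the metric coefficients divided by the area element. -/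
lemma hasFDerivAt_quot {E B G N : ℝ × ℝ → ℝ} {E' B' G' N' : ℝ × ℝ →L[ℝ] ℝ} {z : ℝ × ℝ}
    (hE : HasFDerivAt E E' z) (hB : HasFDerivAt B B' z) (hG : HasFDerivAt G G' z)
    (hN : HasFDerivAt N N' z) (hpos : 0 < E z * G z - B z ^ 2) :
    ∃ T : ℝ × ℝ →L[ℝ] ℝ,
      HasFDerivAt (fun z => N z / √(E z * G z - B z ^ 2)) T z ∧
      ∀ d, T d = ((E z * G z - B z ^ 2) * N' d
        - N z * ((E' d * G z + E z * G' d) / 2 - B z * B' d)) / √(E z * G z - B z ^ 2) ^ 3 := by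
  have hW : HasFDerivAt (fun z => √(E z * G z - B z ^ 2)) _ z :=
    ((hE.fun_mul hG).fun_sub (hB.pow 2)).sqrt hpos.ne'
  have hWp : 0 < √(E z * G z - B z ^ 2) := Real.sqrt_pos.2 hpos
  have hsq := Real.sq_sqrt hpos.le
  refine ⟨_, (hN.fun_mul ((hasDerivAt_inv hWp.ne').comp_hasFDerivAt z hW)).congr_of_eventuallyEq
    (Filter.Eventually.of_forall fun x => by simp [div_eq_mul_inv]), fun d => ?_⟩
  simp only [Function.comp]
  simp
  generalize √(E z * G z - B z ^ 2) = W at hWp hsq ⊢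
  rw [← hsq]
  field_simp
  ring

/-- **Chern–Osserman**: an entire `C²` solution `f : ℝ² → ℝᵏ` of the minimal surface system
with bounded (total) derivative is affine linear. -/
theorem bernstein_minimal_surface_system_bounded_gradient (k : ℕ) (hk : 1 ≤ k)
    (f : ℝ × ℝ → EuclideanSpace ℝ (Fin k)) (hf : ContDiff ℝ 2 f)
    (hsys : ∀ p : ℝ × ℝ,
      (1 + ‖fy f p‖ ^ 2) • fxx f p - (2 * ⟪fx f p, fy f p⟫) • fxy f p
        + (1 + ‖fx f p‖ ^ 2) • fyy f p = 0)
    (hbd : ∃ M : ℝ, ∀ p : ℝ × ℝ, ‖fderiv ℝ f p‖ ≤ M) :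
    ∃ (A : ℝ × ℝ →ₗ[ℝ] EuclideanSpace ℝ (Fin k)) (b : EuclideanSpace ℝ (Fin k)),
      ∀ p : ℝ × ℝ, f p = A p + b := by
  obtain ⟨K, hK⟩ := hbd
  have hfd : Differentiable ℝ f := hf.differentiable (by norm_num)
  have hf1 : ContDiff ℝ 1 (fderiv ℝ f) := hf.fderiv_right (by norm_num)
  have hDd : Differentiable ℝ (fderiv ℝ f) := hf1.differentiable (by norm_num)
  have hX : ∀ z, HasFDerivAt (fx f) (fderiv ℝ (fx f) z) z := fun z => by
    have : Differentiable ℝ (fx f) := fun z => (hDd z).clm_apply (differentiableAt_const _)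
    exact (this z).hasFDerivAt
  have hY : ∀ z, HasFDerivAt (fy f) (fderiv ℝ (fy f) z) z := fun z => by
    have : Differentiable ℝ (fy f) := fun z => (hDd z).clm_apply (differentiableAt_const _)
    exact (this z).hasFDerivAt
  have hsymm : ∀ z, fderiv ℝ (fy f) z (1, 0) = fxy f z := fun z => by
    have h1 : fderiv ℝ (fy f) z (1, 0) = fderiv ℝ (fderiv ℝ f) z (1, 0) (0, 1) := by
      have := (hDd z).hasFDerivAt.clm_apply (hasFDerivAt_const ((0, 1) : ℝ × ℝ) z)
      have e : fderiv ℝ (fy f) z = _ := this.fderiv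
      rw [e]; simp
    have h2 : fxy f z = fderiv ℝ (fderiv ℝ f) z (0, 1) (1, 0) := by
      have := (hDd z).hasFDerivAt.clm_apply (hasFDerivAt_const ((1, 0) : ℝ × ℝ) z)
      have e : fderiv ℝ (fx f) z = _ := this.fderiv
      rw [fxy, e]; simp
    rw [h1, h2]
    exact (hf.contDiffAt.isSymmSndFDerivAt (by simp)).eq _ _
  -- metric coefficients
  let E : ℝ × ℝ → ℝ := fun z => 1 + ‖fx f z‖ ^ 2
  let G : ℝ × ℝ → ℝ := fun z => 1 + ‖fy f z‖ ^ 2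
  let B : ℝ × ℝ → ℝ := fun z => ⟪fx f z, fy f z⟫
  have hE : ∀ z, ∃ T : ℝ × ℝ →L[ℝ] ℝ, HasFDerivAt E T z ∧
      ∀ d, T d = 2 * ⟪fx f z, fderiv ℝ (fx f) z d⟫ := fun z =>
    ⟨_, ((hX z).norm_sq).const_add 1, fun d => by simp⟩
  have hG : ∀ z, ∃ T : ℝ × ℝ →L[ℝ] ℝ, HasFDerivAt G T z ∧
      ∀ d, T d = 2 * ⟪fy f z, fderiv ℝ (fy f) z d⟫ := fun z =>
    ⟨_, ((hY z).norm_sq).const_add 1, fun d => by simp⟩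
  have hB : ∀ z, ∃ T : ℝ × ℝ →L[ℝ] ℝ, HasFDerivAt B T z ∧
      ∀ d, T d = ⟪fx f z, fderiv ℝ (fy f) z d⟫ + ⟪fy f z, fderiv ℝ (fx f) z d⟫ := fun z =>
    ⟨_, (hX z).inner ℝ (hY z), fun d => by simp [real_inner_comm]⟩
  choose E' hE' hE'd using hE
  choose G' hG' hG'd using hG
  choose B' hB' hB'd using hB
  have hpos : ∀ z, 0 < E z * G z - B z ^ 2 := fun z => by
    have h1 : B z ^ 2 ≤ (‖fx f z‖ * ‖fy f z‖) ^ 2 :=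
      sq_le_sq' (neg_le_of_abs_le (abs_real_inner_le_norm _ _)) (real_inner_le_norm _ _)
    simp only [E, G]
    nlinarith [sq_nonneg ‖fx f z‖, sq_nonneg ‖fy f z‖]
  have hWpos : ∀ z, 0 < √(E z * G z - B z ^ 2) := fun z => Real.sqrt_pos.2 (hpos z)
  have hWsq : ∀ z, √(E z * G z - B z ^ 2) ^ 2 = E z * G z - B z ^ 2 :=
    fun z => Real.sq_sqrt (hpos z).le
  choose a' ha' ha'd using fun z => hasFDerivAt_quot (hE' z) (hB' z) (hG' z) (hE' z) (hpos z)
  choose b' hb' hb'd using fun z => hasFDerivAt_quot (hE' z) (hB' z) (hG' z) (hB' z) (hpos z)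
  choose c' hc' hc'd using fun z => hasFDerivAt_quot (hE' z) (hB' z) (hG' z) (hG' z) (hpos z)
  let a : ℝ × ℝ → ℝ := fun z => E z / √(E z * G z - B z ^ 2)
  let b : ℝ × ℝ → ℝ := fun z => B z / √(E z * G z - B z ^ 2)
  let c : ℝ × ℝ → ℝ := fun z => G z / √(E z * G z - B z ^ 2)
  have hac : Continuous a := continuous_iff_continuousAt.2 fun z => (ha' z).continuousAt
  have hbc : Continuous b := continuous_iff_continuousAt.2 fun z => (hb' z).continuousAt
  have hcc : Continuous c := continuous_iff_continuousAt.2 fun z => (hc' z).continuousAt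
  have hdet : ∀ z, a z * c z - b z ^ 2 = 1 := fun z => by
    have h1 := hWpos z
    have h2 := hWsq z
    simp only [a, b, c]
    generalize √(E z * G z - B z ^ 2) = W at *
    field_simp
    linarith
  have hapos : ∀ z, 0 < a z := fun z => div_pos (by positivity) (hWpos z)
  -- the two contracted equations
  have hR : ∀ z (y : EuclideanSpace ℝ (Fin k)),
      G z * ⟪y, fxx f z⟫ - 2 * B z * ⟪y, fxy f z⟫ + E z * ⟪y, fyy f z⟫ = 0 := fun z y => by
    have := congrArg (fun x => ⟪y, x⟫) (hsys z)
    simpa only [inner_add_right, inner_sub_right, real_inner_smul_right, inner_zero_right] using this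
  have cl1 : ∀ z, a' z (0, 1) = b' z (1, 0) := fun z => by
    rw [ha'd, hb'd]
    congr 1
    simp only [hE'd, hG'd, hB'd, hsymm]
    have r1 := hR z (fx f z)
    have r2 := hR z (fy f z)
    simp only [fxx, fxy, fyy] at r1 r2 ⊢
    linear_combination B z * r1 - E z * r2
  have cl2 : ∀ z, b' z (0, 1) = c' z (1, 0) := fun z => by
    rw [hb'd, hc'd]
    congr 1
    simp only [hE'd, hG'd, hB'd, hsymm]
    have r1 := hR z (fx f z)
    have r2 := hR z (fy f z)
    simp only [fxx, fxy, fyy] at r1 r2 ⊢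
    linear_combination G z * r1 - B z * r2
  obtain ⟨Φ, hΦ⟩ := poincare_plane_s5 a b a' b' ha' hb' cl1
  obtain ⟨Ψ, hΨ⟩ := poincare_plane_s5 b c b' c' hb' hc' cl2
  -- the coordinate functions
  have hx := alph_const a b c Φ Ψ (fun _ => 1) (fun _ => 0) (fun z => z.1) Ψ hac hbc hcc
    hdet hapos hΦ hΨ (fun z => by simpa using hasFDerivAt_fst (𝕜 := ℝ) (p := z))
    (fun z => by simpa using hΨ z) 1 (by simp) (by simp)
  have hy := alph_const a b c Φ Ψ (fun _ => 0) (fun _ => 1) (fun z => z.2) (fun z => -Φ z)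
    hac hbc hcc hdet hapos hΦ hΨ (fun z => by simpa using hasFDerivAt_snd (𝕜 := ℝ) (p := z))
    (fun z => (hΦ z).fun_neg.congr_fderiv (by ext <;> simp)) 1 (by simp) (by simp)
  have hbd1 : ∀ z (j : Fin k) (d : ℝ × ℝ), ‖d‖ ≤ 1 → |fderiv ℝ f z d j| ≤ K := by
    intro z j d hd
    have h1 : ‖fderiv ℝ f z d j‖ ≤ ‖fderiv ℝ f z d‖ := PiLp.norm_apply_le _ j
    have h2 := (fderiv ℝ f z).le_opNorm d
    have h3 := hK z
    have h4 : ‖fderiv ℝ f z‖ * ‖d‖ ≤ ‖fderiv ℝ f z‖ * 1 := by gcongr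
    rw [Real.norm_eq_abs] at h1
    linarith
  have hj : ∀ j : Fin k, ∀ z w, alph (a z) (b z) (c z) (fx f z j) (fy f z j)
      = alph (a w) (b w) (c w) (fx f w j) (fy f w j) := by
    intro j
    let π : EuclideanSpace ℝ (Fin k) →L[ℝ] ℝ := EuclideanSpace.proj j
    have hp : ∀ z, HasFDerivAt (fun z => fx f z j) (π.comp (fderiv ℝ (fx f) z)) z :=
      fun z => π.hasFDerivAt.comp z (hX z)
    have hq : ∀ z, HasFDerivAt (fun z => fy f z j) (π.comp (fderiv ℝ (fy f) z)) z :=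
      fun z => π.hasFDerivAt.comp z (hY z)
    obtain ⟨v, hv⟩ := poincare_plane_s5 (fun z => b z * fx f z j - a z * fy f z j)
      (fun z => c z * fx f z j - b z * fy f z j) _ _
      (fun z => ((hb' z).fun_mul (hp z)).fun_sub ((ha' z).fun_mul (hq z)))
      (fun z => ((hc' z).fun_mul (hp z)).fun_sub ((hb' z).fun_mul (hq z)))
      (fun z => by
        have r := congrArg (fun x : EuclideanSpace ℝ (Fin k) => x j) (hsys z)
        have h1 := hWpos z
        simp [π, cl1, cl2, hsymm] at r ⊢
        change G z * _ - 2 * B z * _ + E z * _ = 0 at r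
        simp only [fxx, fxy, fyy] at r ⊢
        generalize √(E z * G z - B z ^ 2) = W at *
        field_simp
        linear_combination -r)
    refine alph_const a b c Φ Ψ (fun z => fx f z j) (fun z => fy f z j) (fun z => f z j) v
      hac hbc hcc hdet hapos hΦ hΨ (fun z => ?_) hv K
      (fun z => hbd1 z j _ (by simp)) (fun z => hbd1 z j _ (by simp))
    refine (π.hasFDerivAt.comp z (hfd z).hasFDerivAt).congr_fderiv ?_
    ext <;> simp [π, fx, fy]
  have hcpos : ∀ z, 0 < c z := fun z => div_pos (by positivity) (hWpos z)
  have hpq : ∀ z w, fx f z = fx f w ∧ fy f z = fy f w := by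
    intro z w
    have x0 := hx z w
    have y0 := hy z w
    have key : ∀ j, fx f z j = fx f w j ∧ fy f z j = fy f w j := by
      intro j
      have j0 := hj j z w
      have d1 := hdet z
      have d2 := hdet w
      have T1 : 2 + a z + c z ≠ 0 := by have := hapos z; have := hcpos z; positivity
      have T2 : 2 + a w + c w ≠ 0 := by have := hapos w; have := hcpos w; positivity
      simp only [alph, Complex.mk.injEq] at x0 y0 j0
      obtain ⟨x1, x2⟩ := x0
      obtain ⟨y1, y2⟩ := y0
      obtain ⟨j1, j2⟩ := j0
      simp only [one_mul, zero_mul, sub_zero, zero_sub] at x1 x2 y1 y2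
      generalize fx f z j = p at *
      generalize fy f z j = q at *
      generalize fx f w j = p' at *
      generalize fy f w j = q' at *
      generalize a z = A at *
      generalize b z = b₁ at *
      generalize c z = C at *
      generalize a w = A₂ at *
      generalize b w = b₂ at *
      generalize c w = C₂ at *
      have f1 : p * (1 + C) - q * b₁ = (p' * (1 + C) - q' * b₁) := by
        have : (p' * (1 + C₂) - q' * b₂) / (2 + A₂ + C₂)
          = (p' * (1 + C) - q' * b₁) / (2 + A + C) := by
          linear_combination (-p') * x1 + q' * x2
        rw [this] at j1
        exact (div_left_inj' T1).1 j1
      have f2 : p * b₁ - q * (1 + A) = (p' * b₁ - q' * (1 + A)) := by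
        have : (p' * b₂ - q' * (1 + A₂)) / (2 + A₂ + C₂)
          = (p' * b₁ - q' * (1 + A)) / (2 + A + C) := by
          linear_combination (-p') * x2 - q' * y2
        rw [this] at j2
        exact (div_left_inj' T1).1 j2
      constructor
      · apply mul_left_cancel₀ T1
        linear_combination (1 + A) * f1 - b₁ * f2 - (p - p') * d1
      · apply mul_left_cancel₀ T1
        linear_combination b₁ * f1 - (1 + C) * f2 - (q - q') * d1
    exact ⟨by ext j; exact (key j).1, by ext j; exact (key j).2⟩
  have hconst : ∀ z, fderiv ℝ f z = fderiv ℝ f 0 := fun z => by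
    ext1
    · ext1; simpa [fx] using (hpq z 0).1
    · ext1; simpa [fy] using (hpq z 0).2
  refine ⟨(fderiv ℝ f 0 : ℝ × ℝ →ₗ[ℝ] EuclideanSpace ℝ (Fin k)), f 0, fun z => ?_⟩
  have hg : ∀ z, HasFDerivAt (fun z => f z - fderiv ℝ f 0 z)
      (0 : ℝ × ℝ →L[ℝ] EuclideanSpace ℝ (Fin k)) z := fun z => by
    refine ((hfd z).hasFDerivAt.fun_sub (fderiv ℝ f 0).hasFDerivAt).congr_fderiv ?_
    rw [hconst z, sub_self]
  have := is_const_of_fderiv_eq_zero (𝕜 := ℝ) (fun z => (hg z).differentiableAt)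
    (fun z => (hg z).fderiv) z 0
  simp only [map_zero, sub_zero] at this
  rw [← this]
  simp
end
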